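/- Let G be a countable group acting by graph automorphisms on a countable tree T, and suppose that every infinite geodesic 𝐯 in T has a finite initial segment σ such that Stab_G(𝐯) is uniformly coamenable in Stab_G(σ). Then the orbit equivalence relation E_G^{∂T} of the induced action of G on the Gromov boundary ∂T is Borel 2-amenable, and in particular measure-hyperfinite. -/

import Mathlib

open MeasureTheory Function Filter

/-! ### Countable Borel equivalence relations -/

section CBER

variable {X Y : Type*} [MeasurableSpace X] [MeasurableSpace Y]

/-- A countable Borel equivalence relation on a standard Borel space. -/
def IsCBER (E : X → X → Prop) : Prop :=
  Equivalence E ∧ MeasurableSet {p : X × X | E p.1 p.2} ∧ ∀ x : X, {y | E x y}.Countable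

/-- `B` meets every `E`-class in exactly one point. -/
def IsTransversal (E : X → X → Prop) (B : Set X) : Prop :=
  ∀ x : X, ∃! y : X, y ∈ B ∧ E x y

/-- A CBER is smooth if it admits a Borel transversal. -/
def SmoothRel (E : X → X → Prop) : Prop :=
  ∃ B : Set X, MeasurableSet B ∧ IsTransversal E B

/-- A Borel equivalence relation all of whose classes are finite. -/
def IsFiniteBorelEquivalence (E : X → X → Prop) : Prop :=
  Equivalence E ∧ MeasurableSet {p : X × X | E p.1 p.2} ∧ ∀ x : X, {y | E x y}.Finite

/-- A CBER is (Borel) hyperfinite if it is the increasing union of a sequence of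
Borel equivalence relations with finite classes. -/
def Hyperfinite (E : X → X → Prop) : Prop :=
  ∃ F : ℕ → X → X → Prop,
    (∀ i, IsFiniteBorelEquivalence (F i)) ∧
    (∀ i x y, F i x y → F (i + 1) x y) ∧
    (∀ x y, E x y ↔ ∃ i, F i x y)

/-- Borel reducibility of equivalence relations. -/
def BorelReducible (E : X → X → Prop) (F : Y → Y → Prop) : Prop :=
  ∃ f : X → Y, Measurable f ∧ ∀ x x' : X, E x x' ↔ F (f x) (f x')

/-- Borel bireducibility of equivalence relations. -/
def BorelBireducible (E : X → X → Prop) (F : Y → Y → Prop) : Prop :=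
  BorelReducible E F ∧ BorelReducible F E

/-- The saturation `[A]_E` of a set `A`: the smallest `E`-invariant set containing `A`. -/
def Saturation (E : X → X → Prop) (A : Set X) : Set X :=
  {x : X | ∃ a ∈ A, E x a}

end CBER

/-! ### ℓ¹ machinery, amenability of CBERs -/

section Amen

variable {X : Type*} [MeasurableSpace X]

/-- ℓ¹ distance between two summable functions. -/
noncomputable def l1dist {A : Type*} (p q : A → ℝ) : ℝ :=
  ∑' a : A, |p a - q a|

/-- `p` is a probability measure concentrated on the `E`-class of `x`
(identified with its density). -/
def IsProbOnClass (E : X → X → Prop) (p : X → ℝ) (x : X) : Prop :=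
  (∀ y, 0 ≤ p y) ∧ (∀ y, p y ≠ 0 → E x y) ∧ HasSum p 1

/-- A CBER is Borel amenable if there is a sequence of Borel assignments of probability
measures on the classes which are asymptotically invariant. -/
def BorelAmenable (E : X → X → Prop) : Prop :=
  ∃ p : ℕ → X → X → ℝ,
    (∀ i x, IsProbOnClass E (p i x) x) ∧
    (∀ i, Measurable fun q : X × X => p i q.1 q.2) ∧
    (∀ x y, E x y → ∀ ε : ℝ, 0 < ε → ∀ᶠ i in atTop, l1dist (p i x) (p i y) < ε)

/-- A CBER is Borel 2-amenable if there is a double sequence of Borel assignments of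
probability measures on the classes which are asymptotically invariant in the
iterated-limit sense. -/
def Borel2Amenable (E : X → X → Prop) : Prop :=
  ∃ p : ℕ → ℕ → X → X → ℝ,
    (∀ i j x, IsProbOnClass E (p i j x) x) ∧
    (∀ i j, Measurable fun q : X × X => p i j q.1 q.2) ∧
    (∀ x y, E x y → ∀ ε : ℝ, 0 < ε →
      ∀ᶠ i in atTop, ∀ᶠ j in atTop, l1dist (p i j x) (p i j y) < ε)

/-- `E` is μ-hyperfinite: hyperfinite off a μ-null set. -/
def MuHyperfinite (E : X → X → Prop) (μ : Measure X) : Prop :=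
  ∃ A : Set X, MeasurableSet A ∧ μ Aᶜ = 0 ∧ Hyperfinite (fun a b : A => E a b)

/-- `E` is μ-amenable: Borel amenable off a μ-null set. -/
def MuAmenable (E : X → X → Prop) (μ : Measure X) : Prop :=
  ∃ A : Set X, MeasurableSet A ∧ μ Aᶜ = 0 ∧ BorelAmenable (fun a b : A => E a b)

/-- `E` is μ-2-amenable: Borel 2-amenable off a μ-null set. -/
def Mu2Amenable (E : X → X → Prop) (μ : Measure X) : Prop :=
  ∃ A : Set X, MeasurableSet A ∧ μ Aᶜ = 0 ∧ Borel2Amenable (fun a b : A => E a b)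

/-- `E` is measure-hyperfinite: μ-hyperfinite for every Borel probability measure μ. -/
def MeasureHyperfinite (E : X → X → Prop) : Prop :=
  ∀ μ : Measure X, IsProbabilityMeasure μ → MuHyperfinite E μ

end Amen

/-! ### Reiter functions and uniform coamenability -/

section Reiter

/-- A (finitely or infinitely supported) probability function on a countable set. -/
def IsProbFun {A : Type*} (p : A → ℝ) : Prop :=
  (∀ a, 0 ≤ p a) ∧ HasSum p 1

/-- The pushforward of `p : Prob(G)` under the orbit map `g ↦ g • x`. -/
noncomputable def pushMeasure {G X : Type*} [Group G] [MulAction G X]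
    (p : G → ℝ) (x : X) : X → ℝ :=
  fun y => ∑' g : {g : G // g • x = y}, p g.1

/-- `p` is an `(S, ε)`-Reiter function for the action `G ↷ X`. -/
def IsReiterFun {G : Type*} (X : Type*) [Group G] [MulAction G X]
    (S : Finset G) (ε : ℝ) (p : G → ℝ) : Prop :=
  IsProbFun p ∧ ∀ s ∈ S, ∀ x : X, l1dist (pushMeasure p x) (pushMeasure p (s • x)) < ε

/-- A subgroup `H ≤ G` is uniformly coamenable if the action `G ↷ G/H` admits
`(S, ε)`-Reiter functions for all finite `S ⊆ G` and all `ε > 0`. -/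
def UniformlyCoamenable {G : Type*} [Group G] (H : Subgroup G) : Prop :=
  ∀ (S : Finset G) (ε : ℝ), 0 < ε → ∃ p : G → ℝ, IsReiterFun (G ⧸ H) S ε p

/-- The Reiter criterion for amenability of a countable group `Q`. -/
def ReiterAmenable (Q : Type*) [Group Q] : Prop :=
  ∀ (S : Finset Q) (ε : ℝ), 0 < ε → ∃ q : Q → ℝ, IsProbFun q ∧
    ∀ s ∈ S, l1dist q (fun x => q (s⁻¹ * x)) < ε

end Reiter

/-! ### Trees, geodesics and the Gromov boundary -/

section Tree

variable {V : Type*} (T : SimpleGraph V)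

/-- The space of infinite geodesics in the graph `T`. -/
def Geo : Set (ℕ → V) :=
  {v | Function.Injective v ∧ ∀ n, T.Adj (v n) (v (n + 1))}

/-- The shift map (the action of the generator of the monoid ℕ) on `Geo T`. -/
def geoShift (v : Geo T) : Geo T :=
  ⟨fun n => v.1 (n + 1),
   fun a b h => by have := v.2.1 h; omega,
   fun n => v.2.2 (n + 1)⟩

/-- Tail equivalence: the orbit equivalence relation of the shift action of the
monoid ℕ on `Geo T`, i.e. the equivalence relation generated by `v ∼ m • v`. -/
def tailRel : Geo T → Geo T → Prop :=
  Relation.EqvGen fun a b => ∃ m : ℕ, b = (geoShift T)^[m] a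

def tailSetoid : Setoid (Geo T) :=
  ⟨tailRel T, Relation.EqvGen.is_equivalence _⟩

/-- The Gromov boundary `∂T = Geo(T)/ℕ`. -/
def Bdry : Type _ := Quotient (tailSetoid T)

instance [MeasurableSpace V] : MeasurableSpace (Bdry T) :=
  inferInstanceAs (MeasurableSpace (Quotient (tailSetoid T)))

variable {G : Type*} [Group G] [MulAction G V]

/-- The action `G ↷ V` is by graph automorphisms of `T`. -/
def IsGraphAction (G : Type*) [Group G] [MulAction G V] : Prop :=
  ∀ (g : G) (v w : V), T.Adj v w ↔ T.Adj (g • v) (g • w)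

variable {T}

/-- The coordinatewise action of `G` on `Geo T`. -/
def geoSmul (h : IsGraphAction T G) (g : G) (v : Geo T) : Geo T :=
  ⟨fun n => g • v.1 n, (MulAction.injective g).comp v.2.1,
   fun n => (h g _ _).mp (v.2.2 n)⟩

lemma geoShift_geoSmul (h : IsGraphAction T G) (g : G) (v : Geo T) :
    geoShift T (geoSmul h g v) = geoSmul h g (geoShift T v) := rfl

lemma iterate_geoShift_geoSmul (h : IsGraphAction T G) (g : G) (m : ℕ) (v : Geo T) :
    (geoShift T)^[m] (geoSmul h g v) = geoSmul h g ((geoShift T)^[m] v) := by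
  induction m generalizing v with
  | zero => rfl
  | succ m ih =>
      rw [Function.iterate_succ_apply, Function.iterate_succ_apply,
        geoShift_geoSmul, ih]

lemma tailRel_geoSmul (h : IsGraphAction T G) (g : G) {v w : Geo T}
    (hvw : tailRel T v w) : tailRel T (geoSmul h g v) (geoSmul h g w) := by
  induction hvw with
  | rel a b hab =>
      obtain ⟨m, rfl⟩ := hab
      exact Relation.EqvGen.rel _ _ ⟨m, (iterate_geoShift_geoSmul h g m a).symm⟩
  | refl a => exact Relation.EqvGen.refl _
  | symm a b _ ih => exact Relation.EqvGen.symm _ _ ih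
  | trans a b c _ _ ih1 ih2 => exact Relation.EqvGen.trans _ _ _ ih1 ih2

/-- The induced action of `G` on the Gromov boundary `∂T`. -/
def bdrySmul (h : IsGraphAction T G) (g : G) : Bdry T → Bdry T :=
  Quotient.map (geoSmul h g) (fun _ _ hab => tailRel_geoSmul h g hab)

/-- The orbit equivalence relation `E_G^{∂T}` of the boundary action. -/
def bdryRel (h : IsGraphAction T G) : Bdry T → Bdry T → Prop :=
  fun x y => ∃ g : G, bdrySmul h g x = y

/-- The orbit equivalence relation `E_G^{Geo(T)}`. -/
def geoRel (h : IsGraphAction T G) : Geo T → Geo T → Prop :=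
  fun v w => ∃ g : G, geoSmul h g v = w

end Tree

/-! ### Stabilizers of geodesics and of their initial segments -/

section Stab

variable (G : Type*) {V : Type*} [Group G] [MulAction G V]

/-- The (pointwise) stabilizer of an infinite sequence of vertices. -/
def ptwiseStab (v : ℕ → V) : Subgroup G where
  carrier := {g : G | ∀ k : ℕ, g • v k = v k}
  one_mem' := fun k => one_smul _ _
  mul_mem' := fun {a b} ha hb k => by rw [mul_smul, hb k, ha k]
  inv_mem' := fun {a} ha k => inv_smul_eq_iff.mpr (ha k).symm

/-- The stabilizer of the initial segment `(v 0, …, v n)`. -/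
def initStab (v : ℕ → V) (n : ℕ) : Subgroup G where
  carrier := {g : G | ∀ k ≤ n, g • v k = v k}
  one_mem' := fun k _ => one_smul _ _
  mul_mem' := fun {a b} ha hb k hk => by rw [mul_smul, hb k hk, ha k hk]
  inv_mem' := fun {a} ha k hk => inv_smul_eq_iff.mpr (ha k hk).symm

/-- The stabilizer of a finite geodesic given as a tuple of vertices. -/
def finStab {n : ℕ} (f : Fin n → V) : Subgroup G where
  carrier := {g : G | ∀ i : Fin n, g • f i = f i}
  one_mem' := fun i => one_smul _ _
  mul_mem' := fun {a b} ha hb i => by rw [mul_smul, hb i, ha i]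
  inv_mem' := fun {a} ha i => inv_smul_eq_iff.mpr (ha i).symm

end Stab

/-! ### Orbit equivalence relations of monoid actions -/

section MonoidOrbit

/-- The orbit equivalence relation of a monoid action: the equivalence relation
generated by `x ∼ m • x`. -/
def monOrbitRel (M : Type*) {X : Type*} [Monoid M] [MulAction M X] :
    X → X → Prop :=
  Relation.EqvGen fun x y => ∃ m : M, y = m • x

end MonoidOrbit

/-!
A geodesic `v` is determined by its initial segments, and these range over countable sets, so that
choosing orbit representatives among them is a Borel operation. If `Stab(v)` is uniformly coamenable
in the stabilizer of an initial segment `σ`, then one Reiter measure for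
`Stab(σ) ↷ Stab(σ)/Stab(v)`, taken from a countable dense family of finitely supported measures and
translated along the orbit of `σ`, is approximately invariant at every point of the orbit of `v`
simultaneously; hence `G ↷ Geo(T)` is Borel amenable. Two geodesics with the same end merge under
the shift, so pushing the measures forward to `∂T` and averaging over the first `i` shifts makes
them asymptotically independent of the geodesic representing the end; rays from a root represent the
ends in a Borel way, and 2-amenability follows.

For measure-hyperfiniteness, the measures are quantized to multiples of `1/N` and turned into a
random point of the class by ranking the cells under their graphs randomly and taking the column of
the first one (min-wise hashing). Nearby measures then select the same point with high probability,
so selecting the same point is, for a suitable ranking, a finite Borel subrelation containing almost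
all of a given finite part of the relation, and by Borel–Cantelli such subrelations exhaust it
almost everywhere.
-/

/-! ### Pushforwards and the `ℓ¹` distance -/

section L1

variable {A B C : Type*} {p q r : A → ℝ}

theorem IsProbFun.summable (hp : IsProbFun p) : Summable p :=
  hp.2.summable

theorem l1dist_comm (p q : A → ℝ) : l1dist p q = l1dist q p :=
  tsum_congr fun a => abs_sub_comm (p a) (q a)

theorem l1dist_nonneg (p q : A → ℝ) : 0 ≤ l1dist p q :=
  tsum_nonneg fun _ => abs_nonneg _

theorem l1dist_triangle (hp : Summable p) (hq : Summable q) (hr : Summable r) :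
    l1dist p r ≤ l1dist p q + l1dist q r := by
  unfold l1dist
  rw [← (hp.sub hq).abs.tsum_add (hq.sub hr).abs]
  exact (hp.sub hr).abs.tsum_le_tsum (fun a => abs_sub_le _ _ _)
    ((hp.sub hq).abs.add (hq.sub hr).abs)

theorem l1dist_smul (c : ℝ) (p q : A → ℝ) : l1dist (c • p) (c • q) = |c| * l1dist p q := by
  simp only [l1dist, Pi.smul_apply, smul_eq_mul, ← mul_sub, abs_mul, tsum_mul_left]

theorem l1dist_add_le {p' q' : A → ℝ} (hp : Summable p) (hq : Summable q)
    (hp' : Summable p') (hq' : Summable q') :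
    l1dist (p + p') (q + q') ≤ l1dist p q + l1dist p' q' := by
  unfold l1dist
  rw [← (hp.sub hq).abs.tsum_add (hp'.sub hq').abs]
  refine ((hp.add hp').sub (hq.add hq')).abs.tsum_le_tsum (fun a => ?_)
    ((hp.sub hq).abs.add (hp'.sub hq').abs)
  rw [Pi.add_apply, Pi.add_apply, add_sub_add_comm]
  exact abs_add_le _ _

theorem l1dist_sum_le {ι : Type*} (s : Finset ι) {p q : ι → A → ℝ}
    (hp : ∀ i, Summable (p i)) (hq : ∀ i, Summable (q i)) :
    l1dist (∑ i ∈ s, p i) (∑ i ∈ s, q i) ≤ ∑ i ∈ s, l1dist (p i) (q i) := by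
  classical
  have summable_sum {p : ι → A → ℝ} (hp : ∀ i, Summable (p i)) (s : Finset ι) :
      Summable (∑ i ∈ s, p i) := by
    simpa only [Finset.sum_fn] using summable_sum fun i _ => hp i
  induction s using Finset.induction_on with
  | empty => simp [l1dist]
  | insert i s hi ih =>
    rw [Finset.sum_insert hi, Finset.sum_insert hi, Finset.sum_insert hi]
    exact (l1dist_add_le (hp i) (hq i) (summable_sum hp s) (summable_sum hq s)).trans
      (add_le_add_right ih _)

theorem IsProbFun.l1dist_le_two (hp : IsProbFun p) (hq : IsProbFun q) : l1dist p q ≤ 2 := by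
  have hpq : HasSum (fun a => p a + q a) (1 + 1) := hp.2.add hq.2
  refine ((hp.summable.sub hq.summable).abs.tsum_le_of_sum_le fun s => ?_)
  calc ∑ a ∈ s, |p a - q a| ≤ ∑ a ∈ s, (p a + q a) :=
        Finset.sum_le_sum fun a _ => abs_le.mpr ⟨by linarith [hp.1 a, hq.1 a],
          by linarith [hp.1 a, hq.1 a]⟩
    _ ≤ 1 + 1 := sum_le_hasSum s (fun a _ => add_nonneg (hp.1 a) (hq.1 a)) hpq
    _ = 2 := one_add_one_eq_two

/-- The pushforward of a density `p` on `A` along `f : A → B`; `pushMeasure p x` is the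
pushforward of `p` along the orbit map of `x`. -/
noncomputable def pushDensity (f : A → B) (p : A → ℝ) : B → ℝ :=
  fun b => ∑' a : {a // f a = b}, p a

theorem pushMeasure_eq_pushDensity {G X : Type*} [Group G] [MulAction G X] (p : G → ℝ) (x : X) :
    pushMeasure p x = pushDensity (· • x) p :=
  rfl

theorem hasSum_pushDensity {s : ℝ} (f : A → B) (hp : HasSum p s) : HasSum (pushDensity f p) s :=
  ((Equiv.sigmaFiberEquiv f).hasSum_iff.mpr hp).sigma fun b =>
    (hp.summable.subtype {a | f a = b}).hasSum

theorem IsProbFun.pushDensity (f : A → B) (hp : IsProbFun p) : IsProbFun (pushDensity f p) :=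
  ⟨fun _ => tsum_nonneg fun a => hp.1 a, hasSum_pushDensity f hp.2⟩

theorem exists_of_pushDensity_ne_zero {f : A → B} {b : B} (h : pushDensity f p b ≠ 0) :
    ∃ a, p a ≠ 0 ∧ f a = b := by
  contrapose! h
  have vanish (a : {a // f a = b}) : p a = 0 := by_contra fun ha => h a ha a.2
  simp only [_root_.pushDensity, vanish, tsum_zero]

theorem l1dist_pushDensity_le (f : A → B) (hp : Summable p) (hq : Summable q) :
    l1dist (pushDensity f p) (pushDensity f q) ≤ l1dist p q := by
  have hpq : HasSum (fun a => |p a - q a|) (l1dist p q) := (hp.sub hq).abs.hasSum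
  have push_hpq := hasSum_pushDensity f hpq
  refine ((hasSum_pushDensity f hp.hasSum).summable.sub
    (hasSum_pushDensity f hq.hasSum).summable).abs.tsum_le_tsum (fun b => ?_) push_hpq.summable
    |>.trans_eq push_hpq.tsum_eq
  have hpb : Summable fun a : {a // f a = b} => p a := hp.subtype {a | f a = b}
  have hqb : Summable fun a : {a // f a = b} => q a := hq.subtype {a | f a = b}
  unfold pushDensity
  rw [← hpb.tsum_sub hqb]
  exact norm_tsum_le_tsum_norm (hpb.sub hqb).norm

theorem pushDensity_pushDensity (g : B → C) (f : A → B) (hp : Summable p) :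
    pushDensity g (pushDensity f p) = pushDensity (g ∘ f) p := by
  funext c
  let fiberEquiv : (Σ b : {b // g b = c}, {a // f a = b}) ≃ {a // (g ∘ f) a = c} :=
    { toFun x := ⟨x.2, (congrArg g x.2.2).trans x.1.2⟩
      invFun a := ⟨⟨f a, a.2⟩, a, rfl⟩
      left_inv := by
        rintro ⟨⟨b, hb⟩, a, hab⟩
        obtain rfl : f a = b := hab
        rfl
      right_inv _ := rfl }
  have hpc : Summable fun x => p (fiberEquiv x) :=
    fiberEquiv.summable_iff.mpr (hp.subtype {a | (g ∘ f) a = c})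
  calc pushDensity g (pushDensity f p) c = ∑' x, p (fiberEquiv x) := hpc.tsum_sigma.symm
    _ = pushDensity (g ∘ f) p c := fiberEquiv.tsum_eq fun a => p a

theorem pushDensity_apply_of_injOn {f : A → B} {s : Set A} (hf : s.InjOn f) (hp : support p ⊆ s)
    {a : A} (ha : a ∈ s) : pushDensity f p (f a) = p a := by
  refine tsum_eq_single (⟨a, rfl⟩ : {a' // f a' = f a}) fun a' hne => ?_
  by_contra hpa'
  exact hne (Subtype.ext (hf (hp hpa') ha a'.2))

theorem support_pushDensity_subset (f : A → B) (p : A → ℝ) :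
    support (pushDensity f p) ⊆ f '' support p := fun _ hb =>
  exists_of_pushDensity_ne_zero hb

theorem support_abs_sub_subset {s : Set A} (hp : support p ⊆ s) (hq : support q ⊆ s) :
    support (fun a => |p a - q a|) ⊆ s := by
  intro a ha
  by_contra has
  have hpa : p a = 0 := notMem_support.mp fun h => has (hp h)
  have hqa : q a = 0 := notMem_support.mp fun h => has (hq h)
  exact ha (by simp only [hpa, hqa, sub_zero, abs_zero])

theorem l1dist_pushDensity_of_injOn {f : A → B} {s : Set A} (hf : s.InjOn f)
    (hp : support p ⊆ s) (hq : support q ⊆ s) :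
    l1dist (pushDensity f p) (pushDensity f q) = l1dist p q := by
  have image_subset {u : A → ℝ} (hu : support u ⊆ s) : support (pushDensity f u) ⊆ f '' s :=
    (support_pushDensity_subset f u).trans (Set.image_mono hu)
  calc l1dist (pushDensity f p) (pushDensity f q)
      = ∑' b : f '' s, |pushDensity f p b - pushDensity f q b| :=
        (tsum_subtype_eq_of_support_subset
          (support_abs_sub_subset (image_subset hp) (image_subset hq))).symm
    _ = ∑' a : s, |pushDensity f p (f a) - pushDensity f q (f a)| :=
        tsum_image (fun b => |pushDensity f p b - pushDensity f q b|) hf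
    _ = ∑' a : s, |p a - q a| := tsum_congr fun a => by
        rw [pushDensity_apply_of_injOn hf hp a.2, pushDensity_apply_of_injOn hf hq a.2]
    _ = l1dist p q := tsum_subtype_eq_of_support_subset (support_abs_sub_subset hp hq)

theorem eventually_injOn {D : ℕ → Type*} {f : ∀ m, A → D m}
    (hf : ∀ a b, a ≠ b → ∀ᶠ m in atTop, f m a ≠ f m b) {s : Set A} (hs : s.Finite) :
    ∀ᶠ m in atTop, s.InjOn (f m) := by
  have separated : ∀ a ∈ s, ∀ᶠ m in atTop, ∀ b ∈ s, f m a = f m b → a = b := fun a _ =>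
    (eventually_all_finite hs).mpr fun b _ => by
      rcases eq_or_ne a b with hab | hab
      · exact Eventually.of_forall fun m _ => hab
      · exact (hf a b hab).mono fun m hm h => absurd h hm
  filter_upwards [(eventually_all_finite hs).mpr separated] with m hm a ha b hb hab
  exact hm a ha b hb hab

end L1

section Quantization

variable {A : Type*} {p q : A → ℝ}

/-- The integer-valued function `⌊N p⌋`, an approximation of `N` copies of the density `p`. -/
noncomputable def quantize (N : ℕ) (p : A → ℝ) (hp : Summable p) : A →₀ ℕ :=
  Finsupp.ofSupportFinite (fun a => ⌊p a * N⌋₊) <| by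
    have small : ∀ᶠ a in cofinite, p a * N < 1 :=
      (hp.mul_right (N : ℝ)).tendsto_cofinite_zero.eventually_lt_const one_pos
    refine small.subset fun a ha => ?_
    exact fun hlt => ha (Nat.floor_eq_zero.mpr hlt)

@[simp]
theorem quantize_apply (N : ℕ) (hp : Summable p) (a : A) : quantize N p hp a = ⌊p a * N⌋₊ :=
  rfl

theorem tendsto_quantize_div (hp : IsProbFun p) (a : A) :
    Tendsto (fun N : ℕ => (quantize N p hp.summable a : ℝ) / N) atTop (nhds (p a)) :=
  (tendsto_nat_floor_mul_div_atTop (R := ℝ) (hp.1 a)).comp tendsto_natCast_atTop_atTop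

theorem quantize_div_le (hp : IsProbFun p) (N : ℕ) (a : A) :
    (quantize N p hp.summable a : ℝ) / N ≤ p a :=
  div_le_of_le_mul₀ N.cast_nonneg (hp.1 a)
    (Nat.floor_le (mul_nonneg (hp.1 a) N.cast_nonneg))

theorem quantize_le (hp : IsProbFun p) (N : ℕ) (a : A) : quantize N p hp.summable a ≤ N := by
  have hpa : p a ≤ 1 := le_hasSum hp.2 a fun b _ => hp.1 b
  exact Nat.floor_le_of_le (mul_le_of_le_one_left N.cast_nonneg hpa)

theorem tsum_natCast_eq_degree (w : A →₀ ℕ) : ∑' a, (w a : ℝ) = w.degree := by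
  rw [Finsupp.degree_apply, Nat.cast_sum]
  exact tsum_eq_sum fun a ha => by rw [Finsupp.notMem_support_iff.mp ha, Nat.cast_zero]

theorem tendsto_degree_quantize_div (hp : IsProbFun p) :
    Tendsto (fun N : ℕ => ((quantize N p hp.summable).degree : ℝ) / N) atTop (nhds 1) := by
  rw [← hp.2.tsum_eq]
  simp only [← tsum_natCast_eq_degree, ← tsum_div_const]
  refine tendsto_tsum_of_dominated_convergence hp.summable (tendsto_quantize_div hp)
    (Eventually.of_forall fun N a => ?_)
  rw [Real.norm_of_nonneg (by positivity)]
  exact quantize_div_le hp N a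

theorem tendsto_l1dist_quantize_div (hp : IsProbFun p) (hq : IsProbFun q) :
    Tendsto (fun N : ℕ => l1dist (fun a => (quantize N p hp.summable a : ℝ))
      (fun a => (quantize N q hq.summable a : ℝ)) / N) atTop (nhds (l1dist p q)) := by
  simp only [l1dist, ← tsum_div_const]
  refine tendsto_tsum_of_dominated_convergence (hp.summable.add hq.summable)
    (fun a => ?_) (Eventually.of_forall fun N a => ?_)
  · refine (((tendsto_quantize_div hp a).sub (tendsto_quantize_div hq a)).abs).congr fun N => ?_
    rw [← sub_div, abs_div, Nat.abs_cast]
  · rw [Real.norm_of_nonneg (by positivity), ← Nat.abs_cast N, ← abs_div, sub_div]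
    have hpa := quantize_div_le hp N a
    have hqa := quantize_div_le hq N a
    have hpa_nonneg : 0 ≤ (quantize N p hp.summable a : ℝ) / N := by positivity
    have hqa_nonneg : 0 ≤ (quantize N q hq.summable a : ℝ) / N := by positivity
    exact abs_le.mpr ⟨by linarith [hp.1 a], by linarith [hq.1 a]⟩

theorem eventually_l1dist_quantize_lt (hp : IsProbFun p) (hq : IsProbFun q) {ε : ℝ}
    (h : l1dist p q < ε) :
    ∀ᶠ N in atTop, l1dist (fun a => (quantize N p hp.summable a : ℝ))
      (fun a => (quantize N q hq.summable a : ℝ)) < ε * (quantize N p hp.summable).degree := by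
  have lim := (tendsto_degree_quantize_div hp).const_mul ε
  rw [mul_one] at lim
  filter_upwards [(tendsto_l1dist_quantize_div hp hq).eventually_lt lim h, eventually_gt_atTop 0]
    with N hN hN_pos
  rw [mul_div_assoc'] at hN
  exact (div_lt_div_iff_of_pos_right (Nat.cast_pos.mpr hN_pos)).mp hN

/-- The probability density proportional to `w`. -/
noncomputable def normalizedDensity (w : A →₀ ℕ) : A → ℝ :=
  fun a => w a / w.degree

theorem isProbFun_normalizedDensity {w : A →₀ ℕ} (hw : w ≠ 0) :
    IsProbFun (normalizedDensity w) := by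
  refine ⟨fun a => by unfold normalizedDensity; positivity, ?_⟩
  have degree_ne_zero : (w.degree : ℝ) ≠ 0 :=
    Nat.cast_ne_zero.mpr fun h => hw ((Finsupp.degree_eq_zero_iff w).mp h)
  have hasSum_degree : HasSum (fun a => (w a : ℝ)) w.degree := by
    rw [← tsum_natCast_eq_degree]
    refine (summable_of_hasFiniteSupport (w.hasFiniteSupport.subset fun a ha => ?_)).hasSum
    exact fun h => ha (Nat.cast_eq_zero.mpr h)
  exact div_self degree_ne_zero ▸ hasSum_degree.div_const (w.degree : ℝ)

theorem finite_support_normalizedDensity (w : A →₀ ℕ) : (support (normalizedDensity w)).Finite :=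
  w.hasFiniteSupport.subset fun a ha h =>
    ha (by simp only [normalizedDensity, h, Nat.cast_zero, zero_div])

theorem tendsto_l1dist_normalizedDensity_quantize (hp : IsProbFun p) :
    Tendsto (fun N : ℕ => l1dist p (normalizedDensity (quantize N p hp.summable))) atTop
      (nhds 0) := by
  unfold l1dist normalizedDensity
  set w := fun N : ℕ => quantize N p hp.summable
  have lim (a : A) : Tendsto (fun N => (w N a : ℝ) / (w N).degree) atTop (nhds (p a)) := by
    have quotient := (tendsto_quantize_div hp a).div (tendsto_degree_quantize_div hp) one_ne_zero
    rw [div_one] at quotient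
    refine quotient.congr' ?_
    filter_upwards [eventually_ne_atTop 0] with N hN
    exact div_div_div_cancel_right₀ (Nat.cast_ne_zero.mpr hN) _ _
  rw [← tsum_zero (α := ℝ) (β := A)]
  refine tendsto_tsum_of_dominated_convergence (hp.summable.mul_left 3) (fun a => ?_) ?_
  · simpa only [sub_self, abs_zero] using ((lim a).const_sub (p a)).abs
  · filter_upwards [(tendsto_degree_quantize_div hp).eventually_const_lt one_half_lt_one,
      eventually_gt_atTop 0] with N hdeg hN a
    have hN_pos : (0 : ℝ) < N := Nat.cast_pos.mpr hN
    have hdeg' : (N : ℝ) < 2 * (w N).degree := by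
      have := (lt_div_iff₀ hN_pos).mp hdeg
      linarith
    have hle : (w N a : ℝ) ≤ p a * N := (div_le_iff₀ hN_pos).mp (quantize_div_le hp N a)
    have hbound : (w N a : ℝ) / (w N).degree ≤ 2 * p a := by
      rw [div_le_iff₀ (by linarith)]
      nlinarith [hp.1 a]
    have hnonneg : 0 ≤ (w N a : ℝ) / (w N).degree := by positivity
    rw [norm_abs_eq_norm, Real.norm_eq_abs]
    exact abs_le.mpr ⟨by linarith [hp.1 a], by linarith [hp.1 a]⟩

theorem exists_dense_seq_isProbFun (A : Type*) [Countable A] [Nonempty A] :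
    ∃ d : ℕ → A → ℝ, (∀ j, IsProbFun (d j)) ∧ (∀ j, (support (d j)).Finite) ∧
      ∀ p, IsProbFun p → ∀ ε > 0, ∃ j, l1dist p (d j) < ε := by
  have : Nonempty {w : A →₀ ℕ // w ≠ 0} :=
    (exists_ne (0 : A →₀ ℕ)).elim fun w hw => ⟨w, hw⟩
  obtain ⟨w, hw⟩ := exists_surjective_nat {w : A →₀ ℕ // w ≠ 0}
  refine ⟨fun j => normalizedDensity (w j).1, fun j => isProbFun_normalizedDensity (w j).2,
    fun j => finite_support_normalizedDensity (w j).1, fun p hp ε hε => ?_⟩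
  have degree_pos := (tendsto_degree_quantize_div hp).eventually_const_lt one_pos
  obtain ⟨N, hclose, hdeg⟩ :=
    (((tendsto_l1dist_normalizedDensity_quantize hp).eventually_lt_const hε).and degree_pos).exists
  have quantize_ne_zero : quantize N p hp.summable ≠ 0 := by
    intro h
    simp only [h, map_zero, Nat.cast_zero, zero_div, lt_irrefl] at hdeg
  obtain ⟨j, hj⟩ := hw ⟨_, quantize_ne_zero⟩
  exact ⟨j, by simpa only [hj] using hclose⟩

end Quantization

/-! ### Min-wise hashing -/

section MinHash

open scoped Finset

variable {Z R : Type*} [LinearOrder R]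

/-- `z` is the element of `B` ranked first by `ρ`. -/
def IsArgmin (ρ : Z ≃ R) (B : Finset Z) (z : Z) : Prop :=
  z ∈ B ∧ ∀ z' ∈ B, ρ z ≤ ρ z'

theorem exists_isArgmin (ρ : Z ≃ R) {B : Finset Z} (hB : B.Nonempty) : ∃ z, IsArgmin ρ B z :=
  B.exists_min_image ρ hB

theorem IsArgmin.mono {ρ : Z ≃ R} {B B' : Finset Z} {z : Z} (h : IsArgmin ρ B' z) (hB : B ⊆ B')
    (hz : z ∈ B) : IsArgmin ρ B z :=
  ⟨hz, fun z' hz' => h.2 z' (hB hz')⟩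

theorem IsArgmin.swap_trans [DecidableEq Z] {ρ : Z ≃ R} {B : Finset Z} {z z' : Z}
    (h : IsArgmin ρ B z) (hz' : z' ∈ B) : IsArgmin ((Equiv.swap z z').trans ρ) B z' := by
  refine ⟨hz', fun b hb => ?_⟩
  rw [Equiv.trans_apply, Equiv.trans_apply, Equiv.swap_apply_right]
  apply h.2
  rw [Equiv.swap_apply_def]
  split_ifs
  exacts [hz', h.1, hb]

theorem IsArgmin.unique {ρ : Z ≃ R} {B : Finset Z} {z z' : Z} (h : IsArgmin ρ B z)
    (h' : IsArgmin ρ B z') : z = z' :=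
  ρ.injective ((h.2 z' h'.1).antisymm (h'.2 z h.1))

variable [Fintype (Z ≃ R)]

open Classical in
theorem card_filter_isArgmin_mul_card_le (B : Finset Z) (z : Z) :
    #{ρ : Z ≃ R | IsArgmin ρ B z} * #B ≤ Fintype.card (Z ≃ R) := by
  let winning (z : Z) : Finset (Z ≃ R) := {ρ | IsArgmin ρ B z}
  have card_winning_le : ∀ z' ∈ B, #(winning z) ≤ #(winning z') := fun z' hz' =>
    Finset.card_le_card_of_injOn (Equiv.swap z z').trans
      (fun ρ hρ => by simpa [winning] using (Finset.mem_filter.mp hρ).2.swap_trans hz')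
      fun ρ _ ρ' _ h => Equiv.ext fun b => by
        simpa using congrArg (fun e : Z ≃ R => e (Equiv.swap z z' b)) h
  have disjoint_winning : (B : Set Z).PairwiseDisjoint winning := fun z _ z' _ hne =>
    Finset.disjoint_left.mpr fun ρ hz hz' =>
      hne ((Finset.mem_filter.mp hz).2.unique (Finset.mem_filter.mp hz').2)
  calc #(winning z) * #B = ∑ _z' ∈ B, #(winning z) := by
        rw [Finset.sum_const, smul_eq_mul, mul_comm]
    _ ≤ ∑ z' ∈ B, #(winning z') := Finset.sum_le_sum card_winning_le
    _ = #(B.biUnion winning) := (Finset.card_biUnion disjoint_winning).symm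
    _ ≤ Fintype.card (Z ≃ R) := Finset.card_le_univ _

open Classical in
theorem card_filter_not_exists_isArgmin_mul_card_le [DecidableEq Z] (B B' : Finset Z) :
    #{ρ : Z ≃ R | ¬∃ z, IsArgmin ρ B z ∧ IsArgmin ρ B' z} * #B ≤
      #(symmDiff B B') * Fintype.card (Z ≃ R) := by
  let winning (z : Z) : Finset (Z ≃ R) := {ρ | IsArgmin ρ (B ∪ B') z}
  rcases B.eq_empty_or_nonempty with rfl | hB
  · simp
  have bad_subset : ({ρ : Z ≃ R | ¬∃ z, IsArgmin ρ B z ∧ IsArgmin ρ B' z} : Finset (Z ≃ R)) ⊆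
      (symmDiff B B').biUnion winning := by
    intro ρ hρ
    obtain ⟨z, hz⟩ := exists_isArgmin ρ (hB.mono (Finset.subset_union_left (s₂ := B')))
    refine Finset.mem_biUnion.mpr ⟨z, ?_, Finset.mem_filter.mpr ⟨Finset.mem_univ _, hz⟩⟩
    have not_both : ¬(z ∈ B ∧ z ∈ B') := fun ⟨hzB, hzB'⟩ => (Finset.mem_filter.mp hρ).2
      ⟨z, hz.mono Finset.subset_union_left hzB, hz.mono Finset.subset_union_right hzB'⟩
    have := Finset.mem_union.mp hz.1
    grind [Finset.mem_symmDiff]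
  calc _ ≤ (∑ z ∈ symmDiff B B', #(winning z)) * #(B ∪ B') :=
        Nat.mul_le_mul ((Finset.card_le_card bad_subset).trans Finset.card_biUnion_le)
          (Finset.card_le_card Finset.subset_union_left)
    _ = ∑ z ∈ symmDiff B B', #(winning z) * #(B ∪ B') := Finset.sum_mul _ _ _
    _ ≤ ∑ _z ∈ symmDiff B B', Fintype.card (Z ≃ R) :=
        Finset.sum_le_sum fun z _ => card_filter_isArgmin_mul_card_le _ z
    _ = #(symmDiff B B') * Fintype.card (Z ≃ R) := by rw [Finset.sum_const, smul_eq_mul]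

end MinHash

section Hypograph

open scoped Finset

variable {A C : Type*} {N : ℕ}

open Classical in
/-- The region below the graph of `w`, in which every point `a` is recorded only through its
colour `c a` and every height is cut off at `N`. -/
noncomputable def hypograph (c : A → C) (N : ℕ) (w : A →₀ ℕ) : Finset (C × Fin N) :=
  w.support.biUnion fun a => ({c a} : Finset C) ×ˢ ({t | t < w a} : Finset (Fin N))

theorem mem_hypograph {c : A → C} {w : A →₀ ℕ} {z : C × Fin N} :
    z ∈ hypograph c N w ↔ ∃ a, c a = z.1 ∧ z.2 < w a := by
  simp only [hypograph, Finset.mem_biUnion, Finset.mem_product, Finset.mem_singleton,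
    Finset.mem_filter_univ, Finsupp.mem_support_iff]
  constructor
  · rintro ⟨a, -, ha, hz⟩
    exact ⟨a, ha.symm, hz⟩
  · rintro ⟨a, ha, hz⟩
    exact ⟨a, Nat.ne_zero_of_lt hz, ha.symm, hz⟩

theorem card_hypograph {c : A → C} {w : A →₀ ℕ} (hc : Set.InjOn c w.support)
    (hw : ∀ a, w a ≤ N) : #(hypograph c N w) = w.degree := by
  classical
  rw [hypograph, Finset.card_biUnion, Finsupp.degree_apply]
  · refine Finset.sum_congr rfl fun a _ => ?_
    rw [Finset.card_product, Finset.card_singleton, one_mul, Fin.card_filter_val_lt,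
      min_eq_right (hw a)]
  · refine fun a ha b hb hab => Finset.disjoint_product.mpr (Or.inl ?_)
    exact Finset.disjoint_singleton.mpr fun h => hab (hc ha hb h)

theorem card_hypograph_sdiff_le [DecidableEq C] (c : A → C) (N : ℕ) (w w' : A →₀ ℕ) :
    #(hypograph c N w \ hypograph c N w') ≤ (w - w').degree := by
  let layer (a : A) : Finset (C × Fin N) :=
    ({c a} : Finset C) ×ˢ ({t | w' a ≤ t ∧ t < w a} : Finset (Fin N))
  have card_layer_le (a : A) : #(layer a) ≤ (w - w') a := by
    rw [Finset.card_product, Finset.card_singleton, one_mul, Finsupp.tsub_apply,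
      ← Nat.card_Ico]
    refine Finset.card_le_card_of_injOn Fin.val (fun t ht => ?_) Fin.val_injective.injOn
    simpa using ht
  have sdiff_subset : hypograph c N w \ hypograph c N w' ⊆ (w - w').support.biUnion layer := by
    intro z hz
    obtain ⟨⟨a, ha, hza⟩, hz'⟩ := (Finset.mem_sdiff.mp hz).imp mem_hypograph.mp id
    have hz'a : w' a ≤ z.2 := not_lt.mp fun h => hz' (mem_hypograph.mpr ⟨a, ha, h⟩)
    refine Finset.mem_biUnion.mpr ⟨a, ?_, ?_⟩
    · rw [Finsupp.mem_support_iff, Finsupp.tsub_apply]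
      omega
    · simp only [layer, Finset.mem_product, Finset.mem_singleton, Finset.mem_filter_univ]
      exact ⟨ha.symm, hz'a, hza⟩
  calc _ ≤ ∑ a ∈ (w - w').support, #(layer a) :=
        (Finset.card_le_card sdiff_subset).trans Finset.card_biUnion_le
    _ ≤ (w - w').degree := Finset.sum_le_sum fun a _ => card_layer_le a

theorem l1dist_natCast_eq_degree (w w' : A →₀ ℕ) :
    l1dist (fun a => (w a : ℝ)) (fun a => (w' a : ℝ)) =
      ((w - w') + (w' - w)).degree := by
  rw [← tsum_natCast_eq_degree]
  refine tsum_congr fun a => ?_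
  simp only [Finsupp.add_apply, Finsupp.tsub_apply]
  rcases le_total (w a) (w' a) with h | h
  · rw [Nat.sub_eq_zero_of_le h, zero_add, Nat.cast_sub h, abs_sub_comm,
      abs_of_nonneg (sub_nonneg.mpr (Nat.cast_le.mpr h))]
  · rw [Nat.sub_eq_zero_of_le h, add_zero, Nat.cast_sub h,
      abs_of_nonneg (sub_nonneg.mpr (Nat.cast_le.mpr h))]

theorem card_symmDiff_hypograph_le [DecidableEq C] (c : A → C) (N : ℕ) (w w' : A →₀ ℕ) :
    (#(symmDiff (hypograph c N w) (hypograph c N w')) : ℝ) ≤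
      l1dist (fun a => (w a : ℝ)) (fun a => (w' a : ℝ)) := by
  rw [l1dist_natCast_eq_degree, Nat.cast_le, map_add]
  exact (Finset.card_union_le _ _).trans
    (add_le_add (card_hypograph_sdiff_le c N w w') (card_hypograph_sdiff_le c N w' w))

end Hypograph

/-! ### Hyperfiniteness almost everywhere -/

section MeasureSelection

variable {X : Type*} [MeasurableSpace X] {μ : Measure X}

theorem exists_lt_measure_of_lt_measure_eventually {P : ℕ → X → Prop} {a : ENNReal}
    (h : a < μ {x | ∀ᶠ n in atTop, P n x}) : ∃ n, a < μ {x | P n x} := by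
  have mono : Monotone fun n => {x | ∀ m ≥ n, P m x} :=
    fun n n' hn x hx m hm => hx m (hn.trans hm)
  have union : {x | ∀ᶠ n in atTop, P n x} = ⋃ n, {x | ∀ m ≥ n, P m x} := by
    ext x
    simp only [eventually_atTop, Set.mem_iUnion, Set.mem_ofPred_eq]
  rw [union, mono.measure_iUnion, lt_iSup_iff] at h
  exact h.imp fun n hn => hn.trans_le (measure_mono fun x hx => hx n le_rfl)

theorem measureReal_compl_lt_of_ofReal_lt [IsProbabilityMeasure μ] {P : Set X}
    (hP : MeasurableSet P) {η : ℝ} (h : ENNReal.ofReal (1 - η) < μ P) : μ.real Pᶜ < η := by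
  rw [← ofReal_measureReal] at h
  rw [probReal_compl_eq_one_sub hP]
  linarith [ENNReal.ofReal_lt_ofReal_iff'.mp h]

open Classical in
theorem exists_measureReal_le_of_card_le [IsProbabilityMeasure μ] {I : Type*} [Fintype I]
    [Nonempty I] {Q : I → Set X} (hQ : ∀ i, MeasurableSet (Q i)) {θ η : ℝ} (hθ : 0 ≤ θ)
    (h : ENNReal.ofReal (1 - η) <
      μ {x | (Finset.card {i | x ∈ Q i} : ℝ) ≤ θ * Fintype.card I}) :
    ∃ i, μ.real (Q i) ≤ θ + η := by
  let count (x : X) : ℝ := ∑ i, (Q i).indicator 1 x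
  have count_eq (x : X) : count x = Finset.card {i | x ∈ Q i} := by
    simp only [count, Set.indicator_apply, Pi.one_apply, Finset.sum_boole]
  have measurable_count : Measurable count :=
    Finset.measurable_sum _ fun i _ => measurable_one.indicator (hQ i)
  set P : Set X := {x | (Finset.card {i | x ∈ Q i} : ℝ) ≤ θ * Fintype.card I}
  have hP : MeasurableSet P := by
    simpa only [P, ← count_eq] using measurableSet_le measurable_count measurable_const
  have count_le (x : X) : count x ≤ Fintype.card I * (θ + Pᶜ.indicator 1 x) := by
    by_cases hx : x ∈ P
    · rw [Set.indicator_of_notMem (Set.notMem_compl_iff.mpr hx), add_zero, mul_comm, count_eq]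
      exact hx
    · rw [Set.indicator_of_mem (Set.mem_compl hx), Pi.one_apply, count_eq]
      have : (Finset.card {i | x ∈ Q i} : ℝ) ≤ Fintype.card I := by
        exact_mod_cast Finset.card_le_univ _
      nlinarith [(Fintype.card I).cast_nonneg (α := ℝ)]
  have integrable_indicator {A : Set X} (hA : MeasurableSet A) :
      Integrable (A.indicator (1 : X → ℝ)) μ := (integrable_const 1).indicator hA
  have sum_le : ∑ i, μ.real (Q i) ≤ ∑ _i : I, (θ + η) :=
    calc ∑ i, μ.real (Q i) = ∫ x, count x ∂μ := by
          rw [integral_finsetSum _ fun i _ => integrable_indicator (hQ i)]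
          simp only [integral_indicator_one (hQ _)]
      _ ≤ ∫ x, Fintype.card I * (θ + Pᶜ.indicator 1 x) ∂μ :=
          integral_mono (integrable_finsetSum _ fun i _ => integrable_indicator (hQ i))
            (((integrable_const θ).add (integrable_indicator hP.compl)).const_mul _) count_le
      _ = Fintype.card I * (θ + μ.real Pᶜ) := by
          rw [integral_const_mul, integral_add (integrable_const θ)
            (integrable_indicator hP.compl), integral_indicator_one hP.compl, integral_const,
            probReal_univ, one_smul]
      _ ≤ ∑ _i : I, (θ + η) := by
          rw [Finset.sum_const, nsmul_eq_mul, Finset.card_univ]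
          gcongr
          exact (measureReal_compl_lt_of_ofReal_lt hP h).le
  exact (Finset.exists_le_of_sum_le Finset.univ_nonempty sum_le).imp fun i hi => hi.2

end MeasureSelection

section Hyperfinite

variable {X : Type*} [MeasurableSpace X] {μ : Measure X}

theorem IsFiniteBorelEquivalence.forall_ge {F : ℕ → X → X → Prop}
    (hF : ∀ n, IsFiniteBorelEquivalence (F n)) (i : ℕ) :
    IsFiniteBorelEquivalence fun x y => ∀ n ≥ i, F n x y := by
  refine ⟨⟨fun x n _ => (hF n).1.refl x, fun h n hn => (hF n).1.symm (h n hn),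
    fun h h' n hn => (hF n).1.trans (h n hn) (h' n hn)⟩, ?_, fun x => ?_⟩
  · exact measurableSet_setOfPred.mpr <| Measurable.forall fun n =>
      measurable_const.imp (measurableSet_setOfPred.mp (hF n).2.1)
  · exact ((hF i).2.2 x).subset fun y hy => hy i le_rfl

theorem IsFiniteBorelEquivalence.restrict {F : X → X → Prop} (hF : IsFiniteBorelEquivalence F)
    (A : Set X) : IsFiniteBorelEquivalence fun a b : A => F a b :=
  ⟨⟨fun a => hF.1.refl a, hF.1.symm, hF.1.trans⟩,
    (measurable_subtype_coe.prodMap measurable_subtype_coe) hF.2.1,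
    fun a => (hF.2.2 a).preimage Subtype.val_injective.injOn⟩

theorem hyperfinite_restrict_of_eventually {E : X → X → Prop} {F : ℕ → X → X → Prop}
    (hF : ∀ n, IsFiniteBorelEquivalence (F n)) (hFE : ∀ n x y, F n x y → E x y) {A : Set X}
    (hA : ∀ x ∈ A, ∀ y, E x y → ∀ᶠ n in atTop, F n x y) :
    Hyperfinite fun a b : A => E a b := by
  refine ⟨fun i a b => ∀ n ≥ i, F n a b,
    fun i => (IsFiniteBorelEquivalence.forall_ge hF i).restrict A,
    fun i a b h n hn => h n (i.le_succ.trans hn), fun a b => ⟨fun hab => ?_, ?_⟩⟩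
  · exact eventually_atTop.mp (hA a a.2 b hab)
  · rintro ⟨i, hi⟩
    exact hFE i a b (hi i le_rfl)

variable {G : Type*} [Group G] [MulAction G X] [MeasurableConstSMul G X] [Countable G]

theorem muHyperfinite_of_forall_exists_isFiniteBorelEquivalence
    (h : ∀ (S : Finset G) (ε : ℝ), 0 < ε → ∃ F : X → X → Prop, IsFiniteBorelEquivalence F ∧
      (∀ x y, F x y → y ∈ MulAction.orbit G x) ∧
      μ {x | ∃ s ∈ S, ¬F x (s • x)} ≤ ENNReal.ofReal ε) :
    MuHyperfinite (fun x y : X => y ∈ MulAction.orbit G x) μ := by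
  classical
  obtain ⟨e, he⟩ := exists_surjective_nat G
  choose F hF hFE hFμ using fun n : ℕ =>
    h ((Finset.range (n + 1)).image e) ((1 / 2) ^ n) (by positivity)
  let A : Set X := {x | ∀ g : G, ∀ᶠ n in atTop, F n x (g • x)}
  have hA : MeasurableSet A := by
    simp only [A, eventually_atTop]
    refine measurableSet_setOfPred.mpr <| Measurable.forall fun g => Measurable.exists fun n =>
      Measurable.forall fun m => measurable_const.imp ?_
    exact measurableSet_setOfPred.mp
      ((measurable_id.prodMk (measurable_const_smul g)) (hF m).2.1)
  have tsum_ne_top : ∑' n, μ {x | ∃ s ∈ (Finset.range (n + 1)).image e, ¬F n x (s • x)} ≠ ⊤ := by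
    refine ne_top_of_le_ne_top ?_ (ENNReal.tsum_le_tsum hFμ)
    rw [← ENNReal.ofReal_tsum_of_nonneg (fun n => by positivity) summable_geometric_two]
    exact ENNReal.ofReal_ne_top
  refine ⟨A, hA, measure_mono_null (fun x hx => ?_) (measure_limsup_atTop_eq_zero tsum_ne_top),
    hyperfinite_restrict_of_eventually hF hFE ?_⟩
  · simp only [A, Set.mem_compl_iff, Set.mem_ofPred_eq, not_forall, not_eventually] at hx
    obtain ⟨g, hg⟩ := hx
    obtain ⟨m, rfl⟩ := he g
    rw [mem_limsup_iff_frequently_mem]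
    refine (hg.and_eventually (eventually_ge_atTop m)).mono fun n hn => ⟨e m, ?_, hn.1⟩
    exact Finset.mem_image_of_mem e (Finset.mem_range.mpr (Nat.lt_succ_of_le hn.2))
  · rintro x hx y ⟨g, rfl⟩
    exact hx g

end Hyperfinite

section Selectors

variable {X G : Type*} [Group G] [MulAction G X]

/-- The equivalence relation of selecting the same point of the orbit, where `x` selects
`e (ι x) • x`. Points of index above `k` are isolated, which keeps the classes finite. -/
def selectorRel (e : ℕ → G) (ι : X → ℕ) (k : ℕ) (x y : X) : Prop :=
  x = y ∨ ι x ≤ k ∧ ι y ≤ k ∧ e (ι x) • x = e (ι y) • y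

theorem equivalence_selectorRel (e : ℕ → G) (ι : X → ℕ) (k : ℕ) :
    Equivalence (selectorRel e ι k) where
  refl _ := Or.inl rfl
  symm := Or.imp Eq.symm fun ⟨hx, hy, h⟩ => ⟨hy, hx, h.symm⟩
  trans := by
    rintro x y z (rfl | ⟨hx, hy, hxy⟩) (rfl | ⟨hy', hz, hyz⟩)
    exacts [Or.inl rfl, Or.inr ⟨hy', hz, hyz⟩, Or.inr ⟨hx, hy, hxy⟩,
      Or.inr ⟨hx, hz, hxy.trans hyz⟩]

theorem finite_selectorRel (e : ℕ → G) (ι : X → ℕ) (k : ℕ) (x : X) :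
    {y | selectorRel e ι k x y}.Finite := by
  refine (((Set.finite_Iic k).image fun l => (e l)⁻¹ • e (ι x) • x).insert x).subset ?_
  rintro y (rfl | ⟨-, hy, h⟩)
  · exact Set.mem_insert _ _
  · exact Set.mem_insert_of_mem _ ⟨ι y, hy, inv_smul_eq_iff.mpr h⟩

theorem mem_orbit_of_selectorRel {e : ℕ → G} {ι : X → ℕ} {k : ℕ} {x y : X}
    (h : selectorRel e ι k x y) : y ∈ MulAction.orbit G x := by
  obtain rfl | ⟨-, -, h⟩ := h
  · exact MulAction.mem_orbit_self x
  · exact ⟨(e (ι y))⁻¹ * e (ι x), by simp only [mul_smul, h, inv_smul_smul]⟩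

variable [MeasurableSpace X] [MeasurableConstSMul G X]

theorem measurable_selector_smul (e : ℕ → G) {ι : X → ℕ} (hι : Measurable ι) :
    Measurable fun x => e (ι x) • x :=
  (measurable_from_prod_countable_right (f := fun q : ℕ × X => e q.1 • q.2)
    fun n => measurable_const_smul (e n)).comp (hι.prodMk measurable_id)

theorem isFiniteBorelEquivalence_selectorRel [MeasurableEq X] (e : ℕ → G) {ι : X → ℕ}
    (hι : Measurable ι) (k : ℕ) : IsFiniteBorelEquivalence (selectorRel e ι k) := by
  have hf := measurable_selector_smul e hι
  refine ⟨equivalence_selectorRel e ι k, ?_, finite_selectorRel e ι k⟩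
  exact measurableSet_diagonal.union <|
    (measurableSet_le (hι.comp measurable_fst) measurable_const).inter <|
    (measurableSet_le (hι.comp measurable_snd) measurable_const).inter <|
    measurableSet_eq_fun (hf.comp measurable_fst) (hf.comp measurable_snd)

theorem muHyperfinite_of_forall_exists_selector [MeasurableEq X] [Countable G] {μ : Measure X}
    [IsProbabilityMeasure μ] (e : ℕ → G)
    (h : ∀ (S : Finset G) (ε : ℝ), 0 < ε → ∃ ι : X → ℕ, Measurable ι ∧
      μ.real {x | ∃ s ∈ S, e (ι x) • x ≠ e (ι (s • x)) • s • x} ≤ ε) :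
    MuHyperfinite (fun x y : X => y ∈ MulAction.orbit G x) μ := by
  refine muHyperfinite_of_forall_exists_isFiniteBorelEquivalence fun S ε hε => ?_
  obtain ⟨ι, hι, hμ⟩ := h S (ε / 2) (half_pos hε)
  have eventually_bounded (x : X) : ∀ᶠ k in atTop, ι x ≤ k ∧ ∀ s ∈ S, ι (s • x) ≤ k :=
    (eventually_ge_atTop _).and ((Finset.eventually_all S).mpr fun s _ => eventually_ge_atTop _)
  obtain ⟨k, hk⟩ := exists_lt_measure_of_lt_measure_eventually (μ := μ)
    (a := ENNReal.ofReal (1 - ε / 2)) (P := fun k x => ι x ≤ k ∧ ∀ s ∈ S, ι (s • x) ≤ k) <| by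
      simp only [eventually_bounded, Set.ofPred_true, measure_univ, ENNReal.ofReal_lt_one]
      linarith
  set bounded : Set X := {x | ι x ≤ k ∧ ∀ s ∈ S, ι (s • x) ≤ k}
  have measurable_bounded : MeasurableSet bounded := by
    refine (measurableSet_le hι measurable_const).inter ?_
    refine measurableSet_setOfPred.mpr <| Measurable.forall fun s => measurable_const.imp ?_
    exact measurableSet_setOfPred.mp
      (measurableSet_le (hι.comp (measurable_const_smul s)) measurable_const)
  refine ⟨selectorRel e ι k, isFiniteBorelEquivalence_selectorRel e hι k,
    fun x y => mem_orbit_of_selectorRel, ?_⟩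
  have bad_subset : {x | ∃ s ∈ S, ¬selectorRel e ι k x (s • x)} ⊆
      {x | ∃ s ∈ S, e (ι x) • x ≠ e (ι (s • x)) • s • x} ∪ boundedᶜ := by
    rintro x ⟨s, hs, hx⟩
    by_cases hxk : x ∈ bounded
    · exact Or.inl ⟨s, hs, fun heq => hx (Or.inr ⟨hxk.1, hxk.2 s hs, heq⟩)⟩
    · exact Or.inr hxk
  refine (measure_mono bad_subset).trans ?_
  rw [← ofReal_measureReal]
  refine ENNReal.ofReal_le_ofReal ((measureReal_union_le _ _).trans ?_)
  linarith [measureReal_compl_lt_of_ofReal_lt measurable_bounded hk]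

end Selectors

/-! ### Two-amenable actions are measure-hyperfinite -/

section MinHashSelection

open scoped Finset

variable {A C R : Type*} {N : ℕ}

open Classical in
theorem card_filter_not_exists_isArgmin_hypograph_le [LinearOrder R]
    [Fintype (C × Fin N ≃ R)] {c : A → C} {w w' : A →₀ ℕ} (hc : Set.InjOn c w.support)
    (hw : ∀ a, w a ≤ N) {θ : ℝ}
    (h : l1dist (fun a => (w a : ℝ)) (fun a => (w' a : ℝ)) < θ * w.degree) :
    (#{ρ : C × Fin N ≃ R | ¬∃ z, IsArgmin ρ (hypograph c N w) z ∧
      IsArgmin ρ (hypograph c N w') z} : ℝ) ≤ θ * Fintype.card (C × Fin N ≃ R) := by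
  have degree_pos : (0 : ℝ) < w.degree := by
    refine (Nat.cast_nonneg _).lt_of_ne fun h0 => (l1dist_nonneg _ _).not_gt (h.trans_eq ?_)
    rw [← h0, mul_zero]
  refine le_of_mul_le_mul_right ?_ degree_pos
  calc _ ≤ (#(symmDiff (hypograph c N w) (hypograph c N w')) : ℝ) *
        Fintype.card (C × Fin N ≃ R) := by
        rw [← card_hypograph hc hw]
        exact_mod_cast card_filter_not_exists_isArgmin_mul_card_le _ _
    _ ≤ θ * w.degree * Fintype.card (C × Fin N ≃ R) := by
        gcongr
        exact (card_symmDiff_hypograph_le c N w w').trans h.le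
    _ = _ := mul_right_comm _ _ _

theorem measurable_sInf_setOf {X : Type*} [MeasurableSpace X] {P : X → ℕ → Prop}
    (hP : ∀ n, Measurable fun x => P x n) : Measurable fun x => sInf {n | P x n} := by
  refine measurable_of_Ioi fun k => ?_
  have preimage_eq : (fun x => sInf {n | P x n}) ⁻¹' Set.Ioi k =
      {x | (∃ n, P x n) ∧ ∀ n ≤ k, ¬P x n} := by
    ext x
    refine ⟨fun hx => ⟨Nat.nonempty_of_pos_sInf (Nat.zero_lt_of_lt hx), fun n hn =>
      Nat.notMem_of_lt_sInf (hn.trans_lt hx)⟩, fun ⟨hx, hk⟩ => ?_⟩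
    exact lt_of_not_ge fun hle => hk _ hle (Nat.sInf_mem hx)
  rw [preimage_eq]
  exact measurableSet_setOfPred.mpr <| (Measurable.exists hP).and <|
    Measurable.forall fun n => measurable_const.imp (hP n).not

variable {X G : Type*} [Group G] [MulAction G X] [LinearOrder R] {e : ℕ → G} {c : X → C}
  {w : X → X →₀ ℕ}

/-- The least index `n` for which the point `e n • x` realizes the cell of the hypograph of `w x`
ranked first by `ρ`, or `0` if there is none. -/
noncomputable def minHashIndex (e : ℕ → G) (c : X → C) (N : ℕ) (w : X → X →₀ ℕ)
    (ρ : C × Fin N ≃ R) (x : X) : ℕ :=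
  sInf {n | ∃ z, IsArgmin ρ (hypograph c N (w x)) z ∧
    c (e n • x) = z.1 ∧ z.2 < w x (e n • x)}

theorem minHashIndex_spec (he : Surjective e) {ρ : C × Fin N ≃ R} {x : X} {z : C × Fin N}
    (hw : ∀ a ∈ (w x).support, a ∈ MulAction.orbit G x)
    (hz : IsArgmin ρ (hypograph c N (w x)) z) :
    c (e (minHashIndex e c N w ρ x) • x) = z.1 ∧
      z.2 < w x (e (minHashIndex e c N w ρ x) • x) := by
  obtain ⟨a, ha, hza⟩ := mem_hypograph.mp hz.1
  obtain ⟨g, rfl⟩ := hw a (Finsupp.mem_support_iff.mpr (Nat.ne_zero_of_lt hza))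
  obtain ⟨n, rfl⟩ := he g
  obtain ⟨z', hz', hspec⟩ := Nat.sInf_mem (s := {n | ∃ z, IsArgmin ρ (hypograph c N (w x)) z ∧
    c (e n • x) = z.1 ∧ z.2 < w x (e n • x)}) ⟨n, z, hz, ha, hza⟩
  rwa [hz'.unique hz] at hspec

theorem minHashIndex_smul_eq (he : Surjective e) {ρ : C × Fin N ≃ R} {x y : X}
    (hw : ∀ x, ∀ a ∈ (w x).support, a ∈ MulAction.orbit G x)
    (hc : Set.InjOn c ((w x).support ∪ (w y).support : Set X))
    (h : ∃ z, IsArgmin ρ (hypograph c N (w x)) z ∧ IsArgmin ρ (hypograph c N (w y)) z) :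
    e (minHashIndex e c N w ρ x) • x = e (minHashIndex e c N w ρ y) • y := by
  obtain ⟨z, hzx, hzy⟩ := h
  obtain ⟨hx, hx'⟩ := minHashIndex_spec he (hw x) hzx
  obtain ⟨hy, hy'⟩ := minHashIndex_spec he (hw y) hzy
  exact hc (Or.inl (Finsupp.mem_support_iff.mpr (Nat.ne_zero_of_lt hx')))
    (Or.inr (Finsupp.mem_support_iff.mpr (Nat.ne_zero_of_lt hy'))) (hx.trans hy.symm)

open Classical in
theorem card_filter_minHashIndex_smul_ne_le [Fintype (C × Fin N ≃ R)] (he : Surjective e) {x : X}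
    (hw : ∀ x, ∀ a ∈ (w x).support, a ∈ MulAction.orbit G x) (hwN : ∀ x a, w x a ≤ N) {θ : ℝ}
    {S : Finset G} (hS : ∀ s ∈ S, Set.InjOn c ((w x).support ∪ (w (s • x)).support : Set X) ∧
      l1dist (fun a => (w x a : ℝ)) (fun a => (w (s • x) a : ℝ)) < θ * (w x).degree) :
    (#{ρ : C × Fin N ≃ R | ∃ s ∈ S, e (minHashIndex e c N w ρ x) • x ≠
      e (minHashIndex e c N w ρ (s • x)) • s • x} : ℝ) ≤
      #S * θ * Fintype.card (C × Fin N ≃ R) := by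
  let bad (s : G) : Finset (C × Fin N ≃ R) :=
    {ρ | ¬∃ z, IsArgmin ρ (hypograph c N (w x)) z ∧ IsArgmin ρ (hypograph c N (w (s • x))) z}
  have bad_subset : ({ρ | ∃ s ∈ S, e (minHashIndex e c N w ρ x) • x ≠
      e (minHashIndex e c N w ρ (s • x)) • s • x} : Finset (C × Fin N ≃ R)) ⊆ S.biUnion bad := by
    intro ρ hρ
    obtain ⟨s, hs, hne⟩ := (Finset.mem_filter.mp hρ).2
    exact Finset.mem_biUnion.mpr ⟨s, hs, Finset.mem_filter.mpr ⟨Finset.mem_univ _,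
      fun h => hne (minHashIndex_smul_eq he hw (hS s hs).1 h)⟩⟩
  calc _ ≤ ∑ s ∈ S, (#(bad s) : ℝ) := by
        exact_mod_cast (Finset.card_le_card bad_subset).trans Finset.card_biUnion_le
    _ ≤ ∑ _s ∈ S, θ * Fintype.card (C × Fin N ≃ R) := Finset.sum_le_sum fun s hs =>
        card_filter_not_exists_isArgmin_hypograph_le
          ((hS s hs).1.mono Set.subset_union_left) (hwN x) (hS s hs).2
    _ = _ := by rw [Finset.sum_const, nsmul_eq_mul, mul_assoc]

variable [MeasurableSpace X] [MeasurableConstSMul G X] [MeasurableSpace C]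
  [MeasurableSingletonClass C] [Countable C]

theorem measurable_minHashIndex (he : Surjective e) (ρ : C × Fin N ≃ R) (hc : Measurable c)
    (hw : ∀ x, ∀ a ∈ (w x).support, a ∈ MulAction.orbit G x)
    (hwm : ∀ g : G, Measurable fun x => w x (g • x)) :
    Measurable (minHashIndex e c N w ρ) := by
  have measurable_cell (n : ℕ) (z : C × Fin N) :
      Measurable fun x => c (e n • x) = z.1 ∧ z.2 < w x (e n • x) :=
    (measurableSet_setOfPred.mp <|
      (hc.comp (measurable_const_smul (e n))) (measurableSet_singleton z.1)).and <|
    measurableSet_setOfPred.mp (measurableSet_lt measurable_const (hwm (e n)))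
  have measurable_mem (z : C × Fin N) : Measurable fun x => z ∈ hypograph c N (w x) := by
    have mem_iff (x : X) : z ∈ hypograph c N (w x) ↔
        ∃ n, c (e n • x) = z.1 ∧ z.2 < w x (e n • x) := by
      refine mem_hypograph.trans ⟨fun ⟨a, ha, hza⟩ => ?_, fun ⟨n, hn⟩ => ⟨_, hn⟩⟩
      obtain ⟨g, rfl⟩ := hw x a (Finsupp.mem_support_iff.mpr (Nat.ne_zero_of_lt hza))
      obtain ⟨n, rfl⟩ := he g
      exact ⟨n, ha, hza⟩
    simp only [mem_iff]
    exact Measurable.exists fun n => measurable_cell n z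
  refine measurable_sInf_setOf fun n => Measurable.exists fun z => .and ?_ (measurable_cell n z)
  exact (measurable_mem z).and <| Measurable.forall fun z' =>
    (measurable_mem z').imp measurable_const

end MinHashSelection

section MeasureHyperfinite

open scoped Finset

variable {X : Type*} [MeasurableSpace X]

theorem exists_measurable_separating_colourings [MeasurableSpace.CountablySeparated X] :
    ∃ c : ∀ m : ℕ, X → (Fin m → Bool), (∀ m, Measurable (c m)) ∧
      ∀ x y, x ≠ y → ∀ᶠ m in atTop, c m x ≠ c m y := by
  obtain ⟨f, hf, f_inj⟩ := MeasurableSpace.measurable_injection_nat_bool_of_countablySeparated X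
  refine ⟨fun m x l => f x l, fun m => measurable_pi_lambda _ fun l =>
    (measurable_pi_apply _).comp hf, fun x y hxy => ?_⟩
  obtain ⟨l, hl⟩ := Function.ne_iff.mp (f_inj.ne hxy)
  exact (eventually_gt_atTop l).mono fun m hm h => hl (congrFun h ⟨l, hm⟩)

theorem measurableEq_of_countablySeparated [MeasurableSpace.CountablySeparated X] :
    MeasurableEq X := by
  obtain ⟨f, hf, f_inj⟩ := MeasurableSpace.measurable_injection_nat_bool_of_countablySeparated X
  refine ⟨?_⟩
  convert measurableSet_eq_fun (hf.comp measurable_fst) (hf.comp measurable_snd) using 1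
  ext q
  exact f_inj.eq_iff.symm

variable {G : Type*} [Group G] [MulAction G X] {μ : Measure X} [IsProbabilityMeasure μ]

theorem exists_lt_measure_quantize {p : ℕ → ℕ → X → X → ℝ} (hp : ∀ i j x, IsProbFun (p i j x))
    {θ : ℝ} {S : Finset G} (hS : ∀ x, ∀ s ∈ S,
      ∀ᶠ i in atTop, ∀ᶠ j in atTop, l1dist (p i j x) (p i j (s • x)) < θ)
    {C : ℕ → Type*} {c : ∀ m, X → C m} (hc : ∀ x y, x ≠ y → ∀ᶠ m in atTop, c m x ≠ c m y)
    {a : ENNReal} (ha : a < 1) :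
    let w (i j N : ℕ) (x : X) : X →₀ ℕ := quantize N (p i j x) (hp i j x).summable
    ∃ i j N m, a < μ {x | ∀ s ∈ S,
      Set.InjOn (c m) ((w i j N x).support ∪ (w i j N (s • x)).support : Set X) ∧
      l1dist (fun a => (w i j N x a : ℝ)) (fun a => (w i j N (s • x) a : ℝ)) <
        θ * (w i j N x).degree} := by
  intro w
  have eventually_good (x : X) : ∀ᶠ i in atTop, ∀ᶠ j in atTop, ∀ᶠ N in atTop, ∀ᶠ m in atTop,
      ∀ s ∈ S, Set.InjOn (c m) ((w i j N x).support ∪ (w i j N (s • x)).support : Set X) ∧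
        l1dist (fun a => (w i j N x a : ℝ)) (fun a => (w i j N (s • x) a : ℝ)) <
          θ * (w i j N x).degree := by
    simp only [Finset.eventually_all]
    refine fun s hs => (hS x s hs).mono fun i hi => hi.mono fun j hj =>
      (eventually_l1dist_quantize_lt (hp i j x) (hp i j (s • x)) hj).mono fun N hN => ?_
    exact (eventually_injOn hc ((w i j N x).support.finite_toSet.union
      (w i j N (s • x)).support.finite_toSet)).and (.of_forall fun _ => hN)
  rw [← measure_univ (μ := μ), ← Set.eq_univ_of_forall eventually_good] at ha
  obtain ⟨i, hi⟩ := exists_lt_measure_of_lt_measure_eventually ha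
  obtain ⟨j, hj⟩ := exists_lt_measure_of_lt_measure_eventually hi
  obtain ⟨N, hN⟩ := exists_lt_measure_of_lt_measure_eventually hj
  exact ⟨i, j, N, exists_lt_measure_of_lt_measure_eventually hN⟩

variable [Countable G] [MeasurableConstSMul G X]

theorem exists_measureReal_minHashIndex_smul_ne_le [MeasurableEq X] {C R : Type*}
    [MeasurableSpace C] [MeasurableSingletonClass C] [Countable C] [LinearOrder R] {N : ℕ}
    [Finite (C × Fin N ≃ R)] [Nonempty (C × Fin N ≃ R)] {e : ℕ → G} (he : Surjective e)
    {c : X → C} (hc : Measurable c) {w : X → X →₀ ℕ}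
    (hw : ∀ x, ∀ a ∈ (w x).support, a ∈ MulAction.orbit G x)
    (hwm : ∀ g : G, Measurable fun x => w x (g • x)) (hwN : ∀ x a, w x a ≤ N)
    {S : Finset G} {θ η : ℝ} (hθ : 0 ≤ θ) (h : ENNReal.ofReal (1 - η) < μ {x | ∀ s ∈ S,
      Set.InjOn c ((w x).support ∪ (w (s • x)).support : Set X) ∧
      l1dist (fun a => (w x a : ℝ)) (fun a => (w (s • x) a : ℝ)) < θ * (w x).degree}) :
    ∃ ρ : C × Fin N ≃ R, μ.real {x | ∃ s ∈ S, e (minHashIndex e c N w ρ x) • x ≠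
      e (minHashIndex e c N w ρ (s • x)) • s • x} ≤ #S * θ + η := by
  have := Fintype.ofFinite (C × Fin N ≃ R)
  refine exists_measureReal_le_of_card_le (I := C × Fin N ≃ R) (fun ρ => ?_)
    (mul_nonneg (Nat.cast_nonneg _) hθ) (h.trans_le (measure_mono fun x hx => ?_))
  swap
  · rw [Set.mem_ofPred_eq] at hx ⊢
    convert card_filter_minHashIndex_smul_ne_le (R := R) he hw hwN hx
    exact Iff.of_eq Set.mem_ofPred_eq
  have measurable_sel := measurable_selector_smul e (measurable_minHashIndex he ρ hc hw hwm)
  exact measurableSet_setOfPred.mpr <| Measurable.exists fun s => measurable_const.and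
    (measurable_sel.eq (measurable_sel.comp (measurable_const_smul s))).not

theorem exists_measurable_selector [MeasurableSpace.CountablySeparated X]
    {e : ℕ → G} (he : Surjective e)
    (h : Borel2Amenable fun x y : X => y ∈ MulAction.orbit G x)
    (S : Finset G) {ε : ℝ} (hε : 0 < ε) : ∃ ι : X → ℕ, Measurable ι ∧
      μ.real {x | ∃ s ∈ S, e (ι x) • x ≠ e (ι (s • x)) • s • x} ≤ ε := by
  have := measurableEq_of_countablySeparated (X := X)
  obtain ⟨p, hp, measurable_p, eventually_p⟩ := h
  have hp' (i j : ℕ) (x : X) : IsProbFun (p i j x) := ⟨(hp i j x).1, (hp i j x).2.2⟩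
  obtain ⟨c, measurable_c, hc⟩ := exists_measurable_separating_colourings (X := X)
  obtain ⟨θ, θ_pos, hθ⟩ : ∃ θ > 0, #S * θ ≤ ε / 2 := by
    refine ⟨ε / (2 * (#S + 1)), by positivity, ?_⟩
    rw [mul_div_assoc', div_le_div_iff₀ (by positivity) two_pos]
    linarith
  obtain ⟨i, j, N, m, hgood⟩ := exists_lt_measure_quantize (μ := μ) hp'
    (S := S) (fun x s _ => eventually_p x (s • x) ⟨s, rfl⟩ θ θ_pos) hc
    (a := ENNReal.ofReal (1 - ε / 2)) (ENNReal.ofReal_lt_one.mpr (by linarith))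
  set w : X → X →₀ ℕ := fun x => quantize N (p i j x) (hp' i j x).summable
  have w_mem_orbit (x : X) : ∀ a ∈ (w x).support, a ∈ MulAction.orbit G x := by
    refine fun a ha => (hp i j x).2.1 a fun h0 => Finsupp.mem_support_iff.mp ha ?_
    simp only [w, quantize_apply, h0, zero_mul, Nat.floor_zero]
  have measurable_w (g : G) : Measurable fun x => w x (g • x) := by
    simp only [w, quantize_apply]
    exact (((measurable_p i j).comp (measurable_id.prodMk (measurable_const_smul g))).mul_const
      _).nat_floor
  let R := Fin (Fintype.card ((Fin m → Bool) × Fin N))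
  have : Nonempty ((Fin m → Bool) × Fin N ≃ R) := ⟨Fintype.equivFin _⟩
  obtain ⟨ρ, hρ⟩ := exists_measureReal_minHashIndex_smul_ne_le (R := R) he (measurable_c m)
    w_mem_orbit measurable_w (fun x => quantize_le (hp' i j x) N) θ_pos.le hgood
  exact ⟨_, measurable_minHashIndex he ρ (measurable_c m) w_mem_orbit measurable_w, by linarith⟩

theorem measureHyperfinite_of_borel2Amenable [MeasurableSpace.CountablySeparated X]
    (h : Borel2Amenable fun x y : X => y ∈ MulAction.orbit G x) :
    MeasureHyperfinite fun x y : X => y ∈ MulAction.orbit G x := by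
  intro μ _
  have := measurableEq_of_countablySeparated (X := X)
  obtain ⟨e, he⟩ := exists_surjective_nat G
  exact muHyperfinite_of_forall_exists_selector e fun S _ hε => exists_measurable_selector he h S hε

end MeasureHyperfinite

/-! ### Amenable actions from uniformly coamenable stabilizers -/

section Amenability

open MulAction

variable {G X C : Type*} [Group G] [MulAction G X] [MulAction G C] {p q : G → ℝ}

theorem IsProbFun.pushMeasure (hp : IsProbFun p) (x : X) : IsProbFun (pushMeasure p x) :=
  hp.pushDensity _

theorem l1dist_pushMeasure_le (hp : Summable p) (hq : Summable q) (x : X) :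
    l1dist (pushMeasure p x) (pushMeasure q x) ≤ l1dist p q :=
  l1dist_pushDensity_le _ hp hq

theorem finite_support_pushMeasure (hp : (support p).Finite) (x : X) :
    (support (pushMeasure p x)).Finite :=
  (hp.image _).subset (support_pushDensity_subset _ p)

theorem pushMeasure_pushDensity {A : Type*} (f : A → G) {p : A → ℝ} (hp : Summable p) (x : X) :
    pushMeasure (pushDensity f p) x = pushDensity (fun a => f a • x) p :=
  pushDensity_pushDensity _ f hp

theorem pushDensity_pushMeasure (φ : X →[G] C) (hp : Summable p) (x : X) :
    pushDensity φ (pushMeasure p x) = pushMeasure p (φ x) := by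
  rw [pushMeasure_eq_pushDensity, pushDensity_pushDensity _ _ hp]
  exact congrArg (pushDensity · p) (funext fun g => map_smul φ g x)

theorem l1dist_pushMeasure_map_le (φ : X →[G] C) (hp : IsProbFun p) (x y : X) :
    l1dist (pushMeasure p (φ x)) (pushMeasure p (φ y)) ≤
      l1dist (pushMeasure p x) (pushMeasure p y) := by
  simp only [← pushDensity_pushMeasure φ hp.summable]
  exact l1dist_pushDensity_le _ (hp.pushMeasure x).summable (hp.pushMeasure y).summable

theorem IsReiterFun.l1dist_pushMeasure_smul_lt {x : X} {S : Finset G} {ε : ℝ}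
    (hp : IsReiterFun (G ⧸ stabilizer G x) S ε p) {s : G} (hs : s ∈ S) (g : G) :
    l1dist (pushMeasure p (g • x)) (pushMeasure p (s • g • x)) < ε := by
  let φ : G ⧸ stabilizer G x →[G] X := ⟨ofQuotientStabilizer G x, ofQuotientStabilizer_smul G x⟩
  have hlt := (l1dist_pushMeasure_map_le φ hp.1 (g : G ⧸ stabilizer G x) (s • g)).trans_lt
    (hp.2 s hs (g : G ⧸ stabilizer G x))
  rwa [map_smul] at hlt

/-- `p` is `(S, ε)`-Reiter along the `K`-orbit of `x`, where only the elements of `S` that lie in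
`K` are tested; `p` itself may be a measure on all of `G`. -/
def IsReiterOnOrbit (K : Subgroup G) (S : Finset G) (ε : ℝ) (p : G → ℝ) (x : X) : Prop :=
  ∀ k ∈ K, ∀ s ∈ S, s ∈ K → l1dist (pushMeasure p (k • x)) (pushMeasure p (s • k • x)) ≤ ε

theorem isReiterOnOrbit_smul_iff {K : Subgroup G} {S : Finset G} {ε : ℝ} {x : X} {g : G}
    (hg : g ∈ K) : IsReiterOnOrbit K S ε p (g • x) ↔ IsReiterOnOrbit K S ε p x := by
  refine ⟨fun h k hk s hs hsK => ?_, fun h k hk s hs hsK => ?_⟩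
  · simpa only [mul_smul, inv_smul_smul] using h (k * g⁻¹) (K.mul_mem hk (K.inv_mem hg)) s hs hsK
  · simpa only [mul_smul] using h (k * g) (K.mul_mem hk hg) s hs hsK

theorem IsReiterOnOrbit.of_l1dist_le {K : Subgroup G} {S : Finset G} {ε δ : ℝ} {x : X}
    (h : IsReiterOnOrbit K S ε p x) (hp : IsProbFun p) (hq : IsProbFun q)
    (hpq : l1dist p q ≤ δ) : IsReiterOnOrbit K S (ε + 2 * δ) q x := by
  intro k hk s hs hsK
  have push_close (y : X) := (l1dist_pushMeasure_le hp.summable hq.summable y).trans hpq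
  have summable_push {r : G → ℝ} (hr : IsProbFun r) (y : X) := (hr.pushMeasure y).summable
  calc l1dist (pushMeasure q (k • x)) (pushMeasure q (s • k • x))
      ≤ l1dist (pushMeasure q (k • x)) (pushMeasure p (k • x)) +
          (l1dist (pushMeasure p (k • x)) (pushMeasure p (s • k • x)) +
            l1dist (pushMeasure p (s • k • x)) (pushMeasure q (s • k • x))) :=
        (l1dist_triangle (summable_push hq _) (summable_push hp _) (summable_push hq _)).trans <|
          add_le_add_right (l1dist_triangle (summable_push hp _) (summable_push hp _)
            (summable_push hq _)) _
    _ ≤ δ + (ε + δ) := by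
        rw [l1dist_comm (pushMeasure q (k • x))]
        exact add_le_add (push_close _) (add_le_add (h k hk s hs hsK) (push_close _))
    _ = ε + 2 * δ := by ring

theorem UniformlyCoamenable.exists_isReiterOnOrbit {x : X} {c : C}
    (h : UniformlyCoamenable ((stabilizer G x).subgroupOf (stabilizer G c))) (t : G)
    (S : Finset G) {ε : ℝ} (hε : 0 < ε) :
    ∃ p : G → ℝ, IsProbFun p ∧ IsReiterOnOrbit (stabilizer G (t • c)) S ε p (t • x) := by
  have conj_injective : Injective fun k : stabilizer G c => t * k * t⁻¹ := fun k k' hk =>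
    Subtype.ext (mul_left_cancel (mul_right_cancel hk))
  obtain ⟨q, hq⟩ := h (S.preimage _ conj_injective.injOn) ε hε
  have conj_mem {k : G} (hk : k ∈ stabilizer G (t • c)) : t⁻¹ * k * t ∈ stabilizer G c := by
    rw [mem_stabilizer_iff, mul_smul, mul_smul, mem_stabilizer_iff.mp hk, inv_smul_smul]
  have push_eq (y : X) : pushMeasure (pushDensity (fun k : stabilizer G c => k * t⁻¹) q) (t • y) =
      pushMeasure q y := by
    rw [pushMeasure_pushDensity _ hq.1.summable]
    simp only [mul_smul, inv_smul_smul]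
    rfl
  refine ⟨_, hq.1.pushDensity fun k : stabilizer G c => k * t⁻¹, fun k hk s hs hsK => ?_⟩
  have hlt := IsReiterFun.l1dist_pushMeasure_smul_lt (x := x) hq (s := ⟨_, conj_mem hsK⟩)
    (Finset.mem_preimage.mpr <| by simpa only [mul_assoc, mul_inv_cancel_left, mul_inv_cancel,
      mul_one] using hs) ⟨_, conj_mem hk⟩
  rw [← push_eq, ← push_eq] at hlt
  simpa only [Subgroup.mk_smul, mul_smul, smul_inv_smul] using hlt.le

theorem UniformlyCoamenable.exists_isReiterOnOrbit_dense {x : X} {c : C}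
    (h : UniformlyCoamenable ((stabilizer G x).subgroupOf (stabilizer G c))) {d : ℕ → G → ℝ}
    (hd : ∀ i, IsProbFun (d i)) (d_dense : ∀ p, IsProbFun p → ∀ ε > 0, ∃ i, l1dist p (d i) < ε)
    (t : G) (S : Finset G) {ε : ℝ} (hε : 0 < ε) :
    ∃ i, IsReiterOnOrbit (stabilizer G (t • c)) S ε (d i) (t • x) := by
  obtain ⟨p, hp, hreiter⟩ := h.exists_isReiterOnOrbit t S (half_pos hε)
  obtain ⟨i, hi⟩ := d_dense p hp (ε / 4) (by positivity)
  refine ⟨i, ?_⟩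
  convert hreiter.of_l1dist_le hp (hd i) hi.le using 1
  ring

end Amenability

section BorelAmenability

open MulAction

variable {G X : Type*} [Group G] [MulAction G X] {C : ℕ → Type*} [∀ n, MulAction G (C n)]

theorem isReiterOnOrbit_iff_forall_map {p : G → ℝ} (hp : IsProbFun p) (hfin : (support p).Finite)
    {ρ : ∀ n, X →[G] C n} (hρ : ∀ x y, x ≠ y → ∀ᶠ n in atTop, ρ n x ≠ ρ n y)
    {K : Subgroup G} {S : Finset G} {ε : ℝ} {x : X} :
    IsReiterOnOrbit K S ε p x ↔ ∀ n, IsReiterOnOrbit K S ε p (ρ n x) := by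
  refine ⟨fun h n k hk s hs hsK => ?_, fun h k hk s hs hsK => ?_⟩
  · simp only [← map_smul]
    exact (l1dist_pushMeasure_map_le (ρ n) hp _ _).trans (h k hk s hs hsK)
  · obtain ⟨n, hn⟩ := (eventually_injOn hρ ((finite_support_pushMeasure hfin (k • x)).union
      (finite_support_pushMeasure hfin (s • k • x)))).exists
    rw [← l1dist_pushDensity_of_injOn hn Set.subset_union_left Set.subset_union_right,
      pushDensity_pushMeasure _ hp.summable, pushDensity_pushMeasure _ hp.summable,
      map_smul, map_smul, map_smul]
    exact h n k hk s hs hsK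

theorem exists_smul_smul_eq_smul (G C : Type*) [Group G] [MulAction G C] :
    ∃ t : C → G, ∀ (g : G) (c : C), t (g • c) • g • c = t c • c := by
  have exists_to_rep (c : C) : ∃ t : G, t • c = (Quotient.mk (orbitRel G C) c).out :=
    Quotient.mk_out (s := orbitRel G C) c
  choose t ht using exists_to_rep
  refine ⟨t, fun g c => ?_⟩
  rw [ht, ht, Quotient.sound (s := orbitRel G C) (mem_orbit c g)]

theorem exists_translation_mem_stabilizer {C : Type*} [MulAction G C] {t : C → G}
    (ht : ∀ (g : G) (c : C), t (g • c) • g • c = t c • c) (ρ : X →[G] C) (g : G) (x : X) :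
    ∃ k ∈ stabilizer G (t (ρ x) • ρ x), t (ρ (g • x)) • g • x = k • t (ρ x) • x := by
  refine ⟨t (ρ (g • x)) * g * (t (ρ x))⁻¹, ?_, by simp only [mul_smul, inv_smul_smul]⟩
  rw [mem_stabilizer_iff, mul_smul, mul_smul, inv_smul_smul, map_smul, ht]

theorem exists_measurable_invariant_selection [MeasurableSpace X] {P : ℕ → ℕ → ℕ → X → Prop}
    (hP : ∀ n j i, Measurable (P n j i)) (P_smul : ∀ n j i (g : G) x, P n j i (g • x) ↔ P n j i x)
    (h : ∀ x, ∃ n, ∀ j, ∃ i, P n j i x) :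
    ∃ (n : X → ℕ) (i : ℕ → X → ℕ), Measurable n ∧ (∀ j, Measurable (i j)) ∧
      (∀ (g : G) x, n (g • x) = n x) ∧ (∀ j (g : G) x, i j (g • x) = i j x) ∧
      ∀ x j, P (n x) j (i j x) x := by
  let n (x : X) : ℕ := sInf {n | ∀ j, ∃ i, P n j i x}
  have measurable_n : Measurable n := measurable_sInf_setOf fun n =>
    Measurable.forall fun j => Measurable.exists fun i => hP n j i
  have n_smul (g : G) (x : X) : n (g • x) = n x := by simp only [n, P_smul]
  refine ⟨n, fun j x => sInf {i | P (n x) j i x}, measurable_n,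
    fun j => measurable_sInf_setOf fun i => ?_, n_smul,
    fun j g x => by simp only [n_smul, P_smul], fun x j => Nat.sInf_mem (Nat.sInf_mem (h x) j)⟩
  exact (measurable_from_prod_countable_right (f := fun q : ℕ × X => P q.1 j i q.2)
    fun n => hP n j i).comp (measurable_n.prodMk measurable_id)

/-- The action `G ↷ X` is Borel amenable: there are Borel assignments `x ↦ p j x` of probability
measures on the group whose images in the orbit of `x` are asymptotically invariant. -/
def BorelAmenableAction (G X : Type*) [Group G] [MulAction G X] [MeasurableSpace X] : Prop :=
  ∃ p : ℕ → X → G → ℝ, (∀ j x, IsProbFun (p j x)) ∧ (∀ j g, Measurable fun x => p j x g) ∧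
    ∀ (g : G) (x : X), Tendsto (fun j =>
      l1dist (pushMeasure (p j x) x) (pushMeasure (p j (g • x)) (g • x))) atTop (nhds 0)

variable [MeasurableSpace X] [∀ n, Countable (C n)] [∀ n, MeasurableSpace (C n)]
  [∀ n, DiscreteMeasurableSpace (C n)]

theorem measurable_isReiterOnOrbit_smul {p : G → ℝ} (hp : IsProbFun p) (hfin : (support p).Finite)
    {ρ : ∀ n, X →[G] C n} (measurable_ρ : ∀ n, Measurable (ρ n))
    (hρ : ∀ x y, x ≠ y → ∀ᶠ n in atTop, ρ n x ≠ ρ n y) {n : ℕ} (t : C n → G) {S : Finset G}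
    {ε : ℝ} : Measurable fun x =>
      IsReiterOnOrbit (stabilizer G (t (ρ n x) • ρ n x)) S ε p (t (ρ n x) • x) := by
  simp only [isReiterOnOrbit_iff_forall_map hp hfin hρ, map_smul]
  exact Measurable.forall fun m => (Measurable.of_discrete (f := fun c : C n × C m =>
    IsReiterOnOrbit (stabilizer G (t c.1 • c.1)) S ε p (t c.1 • c.2))).comp
      ((measurable_ρ n).prodMk (measurable_ρ m))

theorem borelAmenableAction_of_uniformlyCoamenable [Countable G] {ρ : ∀ n, X →[G] C n}
    (measurable_ρ : ∀ n, Measurable (ρ n))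
    (hρ : ∀ x y, x ≠ y → ∀ᶠ n in atTop, ρ n x ≠ ρ n y)
    (h : ∀ x, ∃ n, UniformlyCoamenable
      ((stabilizer G x).subgroupOf (stabilizer G (ρ n x)))) :
    BorelAmenableAction G X := by
  classical
  obtain ⟨e, he⟩ := exists_surjective_nat G
  obtain ⟨d, hd, d_fin, d_dense⟩ := exists_dense_seq_isProbFun G
  choose t ht using fun n => exists_smul_smul_eq_smul G (C n)
  let S (j : ℕ) : Finset G := (Finset.range (j + 1)).image e
  let P (n j i : ℕ) (x : X) : Prop := IsReiterOnOrbit (stabilizer G (t n (ρ n x) • ρ n x)) (S j)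
    (1 / (j + 1)) (d i) (t n (ρ n x) • x)
  have P_smul (n j i : ℕ) (g : G) (x : X) : P n j i (g • x) ↔ P n j i x := by
    obtain ⟨k, hk, hkx⟩ := exists_translation_mem_stabilizer (ht n) (ρ n) g x
    simp only [P, hkx]
    rw [map_smul, ht, isReiterOnOrbit_smul_iff hk]
  have exists_P (x : X) : ∃ n, ∀ j, ∃ i, P n j i x := (h x).imp fun n hn j =>
    hn.exists_isReiterOnOrbit_dense hd d_dense _ _ Nat.one_div_pos_of_nat
  obtain ⟨n, i, measurable_n, measurable_i, n_smul, i_smul, hP⟩ :=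
    exists_measurable_invariant_selection (fun n j i => measurable_isReiterOnOrbit_smul (hd i)
      (d_fin i) measurable_ρ hρ (t n)) P_smul exists_P
  let p (j : ℕ) (x : X) : G → ℝ := pushDensity (· * t (n x) (ρ (n x) x)) (d (i j x))
  have push_p (j : ℕ) (x : X) :
      pushMeasure (p j x) x = pushMeasure (d (i j x)) (t (n x) (ρ (n x) x) • x) := by
    simp only [p, pushMeasure_pushDensity _ (hd _).summable, mul_smul]
    rfl
  refine ⟨p, fun j x => (hd _).pushDensity _, fun j g => ?_, fun g x => ?_⟩
  · exact (measurable_from_prod_countable_right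
      (f := fun q : (ℕ × ℕ) × X => pushDensity (· * t q.1.1 (ρ q.1.1 q.2)) (d q.1.2) g)
      fun m => (Measurable.of_discrete (f := fun c => pushDensity (· * t m.1 c) (d m.2) g)).comp
        (measurable_ρ m.1)).comp ((measurable_n.prodMk (measurable_i j)).prodMk measurable_id)
  · obtain ⟨k, hk, hkx⟩ := exists_translation_mem_stabilizer (ht (n x)) (ρ (n x)) g x
    obtain ⟨m, rfl⟩ := he k
    refine squeeze_zero' (.of_forall fun j => l1dist_nonneg _ _) ?_
      tendsto_one_div_add_atTop_nhds_zero_nat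
    filter_upwards [eventually_ge_atTop m] with j hj
    rw [push_p, push_p, n_smul, i_smul, hkx]
    simpa only [one_smul] using hP x j 1 (one_mem _) (e m)
      (Finset.mem_image_of_mem e (Finset.mem_range.mpr (Nat.lt_succ_of_le hj))) hk

end BorelAmenability

/-! ### Averaging along a shift -/

section Averaging

variable {A G X Y : Type*} {f : Y → Y} {u : Y → A → ℝ}

theorem summable_birkhoffSum (hu : ∀ y, Summable (u y)) (n : ℕ) (y : Y) :
    Summable (birkhoffSum f u n y) := by
  simpa only [birkhoffSum, Finset.sum_fn] using summable_sum fun k _ => hu (f^[k] y)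

theorem isProbFun_birkhoffAverage (hu : ∀ y, IsProbFun (u y)) (n : ℕ) (y : Y) :
    IsProbFun (birkhoffAverage ℝ f u (n + 1) y) := by
  have hsum : HasSum (birkhoffSum f u (n + 1) y) ↑(n + 1) := by
    simpa only [birkhoffSum, Finset.sum_fn, Finset.sum_const, Finset.card_range, nsmul_eq_mul,
      mul_one] using hasSum_sum fun k (_ : k ∈ Finset.range (n + 1)) => (hu (f^[k] y)).2
  refine ⟨fun a => mul_nonneg (by positivity) ?_, ?_⟩
  · simpa only [birkhoffSum, Finset.sum_apply] using
      Finset.sum_nonneg fun k _ => (hu (f^[k] y)).1 a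
  · have := hsum.const_smul ((n + 1 : ℕ) : ℝ)⁻¹
    rwa [smul_eq_mul, inv_mul_cancel₀ (Nat.cast_ne_zero.mpr n.succ_ne_zero)] at this

theorem l1dist_birkhoffSum_iterate_le (hu : ∀ y, IsProbFun (u y)) (n a : ℕ) (y : Y) :
    l1dist (birkhoffSum f u n (f^[a] y)) (birkhoffSum f u n y) ≤ 2 * a := by
  have summable_sum (y : Y) := summable_birkhoffSum (f := f) (fun y => (hu y).summable) n y
  have step (y : Y) : l1dist (birkhoffSum f u n (f y)) (birkhoffSum f u n y) ≤ 2 := by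
    have telescope (b : A) := congrFun (birkhoffSum_apply_sub_birkhoffSum f u n y) b
    simp only [Pi.sub_apply] at telescope
    simp only [l1dist, telescope]
    exact (hu _).l1dist_le_two (hu y)
  induction a with
  | zero => simp [l1dist]
  | succ a ih =>
    rw [iterate_succ_apply']
    have := l1dist_triangle (summable_sum (f (f^[a] y))) (summable_sum (f^[a] y)) (summable_sum y)
    push_cast
    linarith [step (f^[a] y)]

theorem iterate_map_smul [Group G] [MulAction G Y] (f : Y →[G] Y) (k : ℕ) (g : G) (y : Y) :
    f^[k] (g • y) = g • f^[k] y :=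
  ((show Function.Commute f (g • ·) from fun y => map_smul f g y).iterate_left k) y

theorem l1dist_birkhoffSum_le_of_iterate_eq_smul [Group G] [MulAction G Y] {f : Y →[G] Y}
    (hu : ∀ y, IsProbFun (u y)) {y y' : Y} {g : G} {a b : ℕ} (h : f^[a] y = g • f^[b] y')
    (n : ℕ) : l1dist (birkhoffSum f u n y) (birkhoffSum f u n y') ≤ 2 * (a + b) +
      ∑ k ∈ Finset.range n, l1dist (u (f^[k + b] y')) (u (g • f^[k + b] y')) := by
  have summable_sum (y : Y) := summable_birkhoffSum (f := f) (fun y => (hu y).summable) n y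
  have move_y := l1dist_birkhoffSum_iterate_le (f := f) hu n a y
  have move_y' := l1dist_birkhoffSum_iterate_le (f := f) hu n b y'
  have move_z : l1dist (birkhoffSum f u n (f^[b] y')) (birkhoffSum f u n (g • f^[b] y')) ≤
      ∑ k ∈ Finset.range n, l1dist (u (f^[k + b] y')) (u (g • f^[k + b] y')) := by
    simp only [birkhoffSum, iterate_map_smul, ← iterate_add_apply]
    exact l1dist_sum_le _ (fun k => (hu _).summable) fun k => (hu _).summable
  have via_gz := l1dist_triangle (summable_sum y) (summable_sum (g • f^[b] y')) (summable_sum y')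
  have via_z := l1dist_triangle (summable_sum (g • f^[b] y')) (summable_sum (f^[b] y'))
    (summable_sum y')
  rw [h, l1dist_comm] at move_y
  rw [l1dist_comm] at move_z
  linarith

theorem eventually_l1dist_birkhoffAverage_lt [Group G] [MulAction G Y] {f : Y →[G] Y}
    {u : ℕ → Y → A → ℝ} (hu : ∀ j y, IsProbFun (u j y))
    (h : ∀ (g : G) y, Tendsto (fun j => l1dist (u j y) (u j (g • y))) atTop (nhds 0))
    {y y' : Y} {g : G} {a b : ℕ} (hyy' : f^[a] y = g • f^[b] y') {ε : ℝ} (hε : 0 < ε) :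
    ∀ᶠ i in atTop, ∀ᶠ j in atTop, l1dist (birkhoffAverage ℝ f (u j) (i + 1) y)
      (birkhoffAverage ℝ f (u j) (i + 1) y') < ε := by
  have tendsto_bound : Tendsto (fun i : ℕ => 2 * (a + b : ℝ) / ((i + 1 : ℕ) : ℝ)) atTop (nhds 0) :=
    (tendsto_const_div_atTop_nhds_zero_nat _).comp (tendsto_add_atTop_nat 1)
  filter_upwards [tendsto_bound.eventually_lt_const hε] with i hi
  have hi_pos : (0 : ℝ) < (i + 1 : ℕ) := Nat.cast_pos.mpr i.succ_pos
  have tendsto_sum : Tendsto (fun j => 2 * (a + b : ℝ) + ∑ k ∈ Finset.range (i + 1),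
      l1dist (u j (f^[k + b] y')) (u j (g • f^[k + b] y'))) atTop (nhds (2 * (a + b))) := by
    simpa only [Finset.sum_const_zero, add_zero] using
      (tendsto_finsetSum (Finset.range (i + 1)) fun k _ => h g (f^[k + b] y')).const_add _
  filter_upwards [tendsto_sum.eventually_lt_const ((div_lt_iff₀ hi_pos).mp hi)] with j hj
  rw [birkhoffAverage, birkhoffAverage, l1dist_smul, abs_of_pos (inv_pos.mpr hi_pos),
    inv_mul_lt_iff₀ hi_pos, mul_comm]
  exact (l1dist_birkhoffSum_le_of_iterate_eq_smul (hu j) hyy' (i + 1)).trans_lt hj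

variable [Group G] [MulAction G X] [MeasurableSpace X] [MeasurableSpace Y]

theorem measurable_pushMeasure_apply [Countable G] [MeasurableConstSMul G X] [MeasurableEq X]
    {p : Y → G → ℝ} (hp : ∀ g, Measurable fun y => p y g) {φ ψ : Y → X} (hφ : Measurable φ)
    (hψ : Measurable ψ) : Measurable fun y => pushMeasure (p y) (φ y) (ψ y) := by
  have pushMeasure_eq (y : Y) : pushMeasure (p y) (φ y) (ψ y) =
      ∑' g, {y | g • φ y = ψ y}.indicator (p · g) y := by
    refine (tsum_subtype {g | g • φ y = ψ y} (p y)).trans (tsum_congr fun g => ?_)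
    simp only [Set.indicator, Set.mem_ofPred_eq]
  simp only [pushMeasure_eq]
  exact Measurable.tsum fun g => (hp g).indicator
    (measurableSet_eq_fun (hφ.const_smul g) hψ)

theorem borel2Amenable_of_borelAmenableAction [Countable G] [MeasurableConstSMul G X]
    [MeasurableEq X] [MulAction G Y] (h : BorelAmenableAction G Y) {f : Y →[G] Y}
    (hf : Measurable f) {π : Y →[G] X} (hπ : Measurable π) (π_f : ∀ y, π (f y) = π y)
    (exists_iterate_eq : ∀ y y', π y = π y' → ∃ a b, f^[a] y = f^[b] y')
    {s : X → Y} (hs : Measurable s) (π_s : ∀ x, π (s x) = x) :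
    Borel2Amenable fun x y : X => y ∈ MulAction.orbit G x := by
  obtain ⟨p, hp, measurable_p, tendsto_p⟩ := h
  let u (j : ℕ) (y : Y) : X → ℝ := pushMeasure (p j y) (π y)
  have hu (j : ℕ) (y : Y) : IsProbFun (u j y) := (hp j y).pushMeasure (π y)
  have π_iterate (k : ℕ) (x : X) : π (f^[k] (s x)) = x :=
    (congrFun (iterate_invariant (funext π_f : π ∘ f = π) k) (s x)).trans (π_s x)
  refine ⟨fun i j x => birkhoffAverage ℝ f (u j) (i + 1) (s x), fun i j x => ?_, fun i j => ?_, ?_⟩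
  · have hprob := isProbFun_birkhoffAverage (f := f) (hu j) i (s x)
    refine ⟨hprob.1, fun y hy => ?_, hprob.2⟩
    obtain ⟨k, -, hk⟩ : ∃ k ∈ Finset.range (i + 1), u j (f^[k] (s x)) y ≠ 0 := by
      refine Finset.exists_ne_zero_of_sum_ne_zero fun h0 => hy ?_
      simp only [birkhoffAverage, birkhoffSum, Pi.smul_apply, Finset.sum_apply, h0, smul_zero]
    obtain ⟨g, -, hg⟩ := exists_of_pushDensity_ne_zero hk
    exact ⟨g, by simpa only [π_iterate] using hg⟩
  · simp only [birkhoffAverage, birkhoffSum, Pi.smul_apply, Finset.sum_apply]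
    have measurable_term (k : ℕ) : Measurable fun q : X × X => u j (f^[k] (s q.1)) q.2 := by
      have measurable_iterate : Measurable fun q : X × X => f^[k] (s q.1) :=
        (hf.iterate k).comp (hs.comp measurable_fst)
      exact measurable_pushMeasure_apply (fun g => (measurable_p j g).comp measurable_iterate)
        (hπ.comp measurable_iterate) measurable_snd
    exact (Finset.measurable_sum _ fun k _ => measurable_term k).const_smul (_ : ℝ)
  · rintro x _ ⟨g, rfl⟩ ε hε
    obtain ⟨a, b, hab⟩ := exists_iterate_eq (s x) (g⁻¹ • s (g • x)) <| by
      rw [map_smul, π_s, π_s, inv_smul_smul]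
    rw [iterate_map_smul] at hab
    refine eventually_l1dist_birkhoffAverage_lt hu (fun g y => ?_) hab hε
    refine squeeze_zero (fun _ => l1dist_nonneg _ _) (fun j => ?_) (tendsto_p g y)
    simp only [u, ← pushDensity_pushMeasure π (hp _ _).summable]
    exact l1dist_pushDensity_le _ ((hp _ _).pushMeasure _).summable
      ((hp _ _).pushMeasure _).summable

end Averaging

/-! ### Rays from a root of the tree -/

section RootedTree

variable {V : Type*} {T : SimpleGraph V} {r u v w : V} {k n : ℕ}

theorem exists_adj_dist_eq_add_one (h : 0 < T.dist r v) :
    ∃ u, T.Adj u v ∧ T.dist r v = T.dist r u + 1 := by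
  obtain ⟨p, hp⟩ := T.exists_walk_of_dist_ne_zero h.ne'
  have adj := p.adj_penultimate fun hnil => by
    rw [← hp, SimpleGraph.Walk.length_eq_zero_iff.mpr hnil] at h
    exact h.false
  obtain ⟨q, hq⟩ := p.dropLast.reachable.exists_walk_length_eq_dist
  have le_add_one := T.dist_le (q.concat adj)
  have add_one_le := T.dist_le p.dropLast
  rw [SimpleGraph.Walk.length_concat] at le_add_one
  rw [SimpleGraph.Walk.length_dropLast] at add_one_le
  exact ⟨p.penultimate, adj, by omega⟩

theorem eq_of_adj_of_dist_eq_add_one (hT : T.IsAcyclic) (hu : T.Adj u v) (hw : T.Adj w v)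
    (dist_u : T.dist r v = T.dist r u + 1) (dist_w : T.dist r v = T.dist r w + 1) : u = w := by
  have reachable : T.Reachable r v := .of_dist_ne_zero (by omega)
  obtain ⟨p, hp⟩ := (reachable.trans hu.symm.reachable).exists_walk_length_eq_dist
  obtain ⟨q, hq⟩ := (reachable.trans hw.symm.reachable).exists_walk_length_eq_dist
  have p_isPath : (p.concat hu).IsPath := SimpleGraph.Walk.isPath_of_length_eq_dist _ <| by
    rw [SimpleGraph.Walk.length_concat, hp, dist_u]
  have q_isPath : (q.concat hw).IsPath := SimpleGraph.Walk.isPath_of_length_eq_dist _ <| by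
    rw [SimpleGraph.Walk.length_concat, hq, dist_w]
  have concat_eq : p.concat hu = q.concat hw :=
    congrArg Subtype.val ((hT.subsingleton_path r v).elim ⟨_, p_isPath⟩ ⟨_, q_isPath⟩)
  simpa only [SimpleGraph.Walk.penultimate_concat] using
    congrArg SimpleGraph.Walk.penultimate concat_eq

variable (T r) in
open Classical in
/-- The parent of `v` in the graph `T` rooted at `r`: a chosen neighbour of `v` one step closer to
`r`, or `v` itself where there is none. -/
noncomputable def parent (v : V) : V :=
  if h : ∃ u, T.Adj u v ∧ T.dist r v = T.dist r u + 1 then h.choose else v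

theorem parent_spec (h : 0 < T.dist r v) :
    T.Adj (parent T r v) v ∧ T.dist r v = T.dist r (parent T r v) + 1 := by
  rw [parent, dif_pos (exists_adj_dist_eq_add_one h)]
  exact (exists_adj_dist_eq_add_one h).choose_spec

theorem parent_eq (hT : T.IsAcyclic) (hu : T.Adj u v) (dist_u : T.dist r v = T.dist r u + 1) :
    parent T r v = u := by
  obtain ⟨adj, dist_eq⟩ := parent_spec (T := T) (r := r) (v := v) (by omega)
  exact eq_of_adj_of_dist_eq_add_one hT adj hu dist_eq dist_u

theorem dist_iterate_parent (m : ℕ) (h : m ≤ T.dist r v) :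
    T.dist r ((parent T r)^[m] v) = T.dist r v - m := by
  induction m with
  | zero => rfl
  | succ m ih =>
    have dist_m := ih (by omega)
    rw [iterate_succ_apply']
    have := (parent_spec (T := T) (r := r) (v := (parent T r)^[m] v) (by omega)).2
    omega

variable (T r) in
/-- The ancestor of `v` at distance `k` from the root `r`; it is `v` itself (truncated subtraction)
when `v` is closer to `r` than that. -/
noncomputable def ancestor (k : ℕ) (v : V) : V :=
  (parent T r)^[T.dist r v - k] v

theorem ancestor_dist_self : ancestor T r (T.dist r v) v = v := by
  rw [ancestor, Nat.sub_self, iterate_zero_apply]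

theorem dist_ancestor (h : k ≤ T.dist r v) : T.dist r (ancestor T r k v) = k := by
  rw [ancestor, dist_iterate_parent _ (Nat.sub_le _ _), Nat.sub_sub_self h]

theorem parent_ancestor_add_one (h : k + 1 ≤ T.dist r v) :
    parent T r (ancestor T r (k + 1) v) = ancestor T r k v := by
  rw [ancestor, ancestor, ← iterate_succ_apply' (parent T r)]
  congr 2
  omega

theorem adj_ancestor_add_one (h : k + 1 ≤ T.dist r v) :
    T.Adj (ancestor T r k v) (ancestor T r (k + 1) v) := by
  rw [← parent_ancestor_add_one h]
  exact (parent_spec (by rw [dist_ancestor h]; exact k.succ_pos)).1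

theorem ancestor_eq_of_adj (hT : T.IsAcyclic) (huv : T.Adj u v)
    (dist_v : T.dist r v = T.dist r u + 1) (h : k ≤ T.dist r u) :
    ancestor T r k v = ancestor T r k u := by
  rw [ancestor, dist_v, Nat.succ_sub h, iterate_succ_apply, parent_eq hT huv dist_v, ancestor]

/-- A geodesic moving away from the root has no way back: it would return to the parent it came
from. -/
theorem eventually_dist_eq_add_one (hT : T.IsTree) (r : V) (v : Geo T) :
    ∀ᶠ n in atTop, T.dist r (v.1 (n + 1)) = T.dist r (v.1 n) + 1 := by
  obtain ⟨n₀, base⟩ : ∃ n, T.dist r (v.1 (n + 1)) = T.dist r (v.1 n) + 1 := by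
    by_contra! never
    have descend (n : ℕ) : T.dist r (v.1 n) + n = T.dist r (v.1 0) := by
      induction n with
      | zero => rfl
      | succ n ih =>
        have := (hT.dist_eq_dist_add_one_of_adj r (v.2.2 n)).resolve_right (never n)
        omega
    have := descend (T.dist r (v.1 0) + 1)
    omega
  refine eventually_atTop.mpr ⟨n₀, fun n hn => ?_⟩
  induction n, hn using Nat.le_induction with
  | base => exact base
  | succ n _ ih =>
    refine (hT.dist_eq_dist_add_one_of_adj r (v.2.2 (n + 1))).resolve_left fun back => ?_
    have := v.2.1 <|
      eq_of_adj_of_dist_eq_add_one hT.isAcyclic (v.2.2 n) (v.2.2 (n + 1)).symm ih back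
    omega

theorem tendsto_dist_atTop (hT : T.IsTree) (r : V) (v : Geo T) :
    Tendsto (fun n => T.dist r (v.1 n)) atTop atTop := by
  obtain ⟨n₀, h⟩ := eventually_atTop.mp (eventually_dist_eq_add_one hT r v)
  refine (tendsto_add_atTop_iff_nat n₀).mp (strictMono_nat_of_lt_succ fun n => ?_).tendsto_atTop
  have := h (n + n₀) (Nat.le_add_left _ _)
  rw [Nat.add_right_comm]
  omega

theorem eventually_forall_ancestor_eq (hT : T.IsTree) (r : V) (v : Geo T) :
    ∀ᶠ m in atTop, ∀ k ≤ T.dist r (v.1 m), ∀ n ≥ m,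
      k ≤ T.dist r (v.1 n) ∧ ancestor T r k (v.1 n) = ancestor T r k (v.1 m) := by
  filter_upwards [eventually_forall_ge_atTop.mpr (eventually_dist_eq_add_one hT r v)]
    with m dist_eq k hk n hn
  induction n, hn using Nat.le_induction with
  | base => exact ⟨hk, rfl⟩
  | succ n hn ih =>
    have dist_succ := dist_eq n hn
    exact ⟨by omega,
      (ancestor_eq_of_adj hT.isAcyclic (v.2.2 n) dist_succ ih.1).trans ih.2⟩

theorem exists_eventually_ancestor_eq (hT : T.IsTree) (r : V) (v : Geo T) (k : ℕ) :
    ∃ w, ∀ᶠ n in atTop, k ≤ T.dist r (v.1 n) ∧ ancestor T r k (v.1 n) = w := by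
  obtain ⟨m, stable, hk⟩ := ((eventually_forall_ancestor_eq hT r v).and
    ((tendsto_dist_atTop hT r v).eventually_ge_atTop k)).exists
  exact ⟨_, eventually_atTop.mpr ⟨m, stable k hk⟩⟩

/-- The vertex at distance `k` from the root `r` on the ray from `r` to the end of `v`, found as the
eventual common ancestor of the vertices of `v`. -/
noncomputable def rayVertex (hT : T.IsTree) (r : V) (v : Geo T) (k : ℕ) : V :=
  (exists_eventually_ancestor_eq hT r v k).choose

theorem eventually_ancestor_eq_rayVertex (hT : T.IsTree) (r : V) (v : Geo T) (k : ℕ) :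
    ∀ᶠ n in atTop, k ≤ T.dist r (v.1 n) ∧ ancestor T r k (v.1 n) = rayVertex hT r v k :=
  (exists_eventually_ancestor_eq hT r v k).choose_spec

theorem rayVertex_eq_iff (hT : T.IsTree) {v : Geo T} :
    rayVertex hT r v k = w ↔
      ∀ᶠ n in atTop, k ≤ T.dist r (v.1 n) ∧ ancestor T r k (v.1 n) = w := by
  refine ⟨fun h => h ▸ eventually_ancestor_eq_rayVertex hT r v k, fun h => ?_⟩
  obtain ⟨n, hn, hn'⟩ := ((eventually_ancestor_eq_rayVertex hT r v k).and h).exists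
  exact hn.2.symm.trans hn'.2

theorem dist_rayVertex (hT : T.IsTree) (r : V) (v : Geo T) (k : ℕ) :
    T.dist r (rayVertex hT r v k) = k := by
  obtain ⟨n, hk, hn⟩ := (eventually_ancestor_eq_rayVertex hT r v k).exists
  rw [← hn, dist_ancestor hk]

theorem adj_rayVertex_add_one (hT : T.IsTree) (r : V) (v : Geo T) (k : ℕ) :
    T.Adj (rayVertex hT r v k) (rayVertex hT r v (k + 1)) := by
  obtain ⟨n, ⟨-, hn⟩, hk, hn'⟩ := ((eventually_ancestor_eq_rayVertex hT r v k).and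
    (eventually_ancestor_eq_rayVertex hT r v (k + 1))).exists
  rw [← hn, ← hn']
  exact adj_ancestor_add_one hk

/-- The geodesic ray from the root `r` to the end of `v`. -/
noncomputable def rootedRay (hT : T.IsTree) (r : V) (v : Geo T) : Geo T :=
  ⟨rayVertex hT r v, LeftInverse.injective (g := T.dist r) (dist_rayVertex hT r v),
    adj_rayVertex_add_one hT r v⟩

theorem iterate_geoShift_apply (v : Geo T) (m n : ℕ) :
    ((geoShift T)^[m] v).1 n = v.1 (n + m) := by
  induction m generalizing v with
  | zero => rfl
  | succ m ih => exact (ih (geoShift T v)).trans rfl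

theorem rootedRay_iterate_geoShift (hT : T.IsTree) (r : V) (v : Geo T) (m : ℕ) :
    rootedRay hT r ((geoShift T)^[m] v) = rootedRay hT r v := by
  refine Subtype.ext (funext fun k => (rayVertex_eq_iff hT).mpr ?_)
  simp only [iterate_geoShift_apply]
  exact (tendsto_add_atTop_nat m).eventually (eventually_ancestor_eq_rayVertex hT r v k)

theorem exists_iterate_geoShift_eq_rootedRay (hT : T.IsTree) (r : V) (v : Geo T) :
    ∃ a b, (geoShift T)^[a] v = (geoShift T)^[b] (rootedRay hT r v) := by
  obtain ⟨m, hm⟩ := eventually_atTop.mp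
    ((eventually_dist_eq_add_one hT r v).and (eventually_forall_ancestor_eq hT r v))
  have dist_eq (n : ℕ) : T.dist r (v.1 (n + m)) = n + T.dist r (v.1 m) := by
    induction n with
    | zero => simp only [zero_add]
    | succ n ih =>
      have := (hm (n + m) (Nat.le_add_left _ _)).1
      rw [Nat.add_right_comm]
      omega
  refine ⟨m, T.dist r (v.1 m), Subtype.ext (funext fun n => ?_)⟩
  rw [iterate_geoShift_apply, iterate_geoShift_apply, ← dist_eq]
  refine ((rayVertex_eq_iff hT).mpr (eventually_atTop.mpr ⟨n + m, fun i hi => ?_⟩)).symm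
  simpa only [ancestor_dist_self] using (hm (n + m) (Nat.le_add_left _ _)).2 _ le_rfl i hi

theorem measurable_geo_apply [MeasurableSpace V] (n : ℕ) : Measurable fun v : Geo T => v.1 n :=
  (measurable_pi_apply n).comp measurable_subtype_coe

theorem measurable_rootedRay [Countable V] [MeasurableSpace V] [DiscreteMeasurableSpace V]
    (hT : T.IsTree) (r : V) : Measurable (rootedRay hT r) := by
  refine Measurable.subtype_mk (measurable_pi_lambda _ fun k => ?_)
  refine measurable_to_countable' fun w => ?_
  have preimage_eq : (rayVertex hT r · k) ⁻¹' {w} =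
      {v : Geo T | ∃ m, ∀ n, m ≤ n → k ≤ T.dist r (v.1 n) ∧ ancestor T r k (v.1 n) = w} :=
    Set.ext fun v => (rayVertex_eq_iff hT).trans eventually_atTop
  rw [preimage_eq]
  refine measurableSet_setOfPred.mpr (.exists fun m => .forall fun n => measurable_const.imp ?_)
  exact (Measurable.of_discrete (f := fun u => k ≤ T.dist r u ∧ ancestor T r k u = w)).comp
    (measurable_geo_apply n)

end RootedTree

/-! ### The boundary of the tree -/

section Boundary

theorem exists_iterate_eq_of_eqvGen {α : Type*} {f : α → α} {x y : α}
    (h : Relation.EqvGen (fun x y => ∃ m, y = f^[m] x) x y) : ∃ a b, f^[a] x = f^[b] y := by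
  induction h with
  | rel x y hxy =>
    obtain ⟨m, rfl⟩ := hxy
    exact ⟨m, 0, rfl⟩
  | refl x => exact ⟨0, 0, rfl⟩
  | symm x y _ ih =>
    obtain ⟨a, b, hab⟩ := ih
    exact ⟨b, a, hab.symm⟩
  | trans x y z _ _ ihxy ihyz =>
    obtain ⟨a, b, hab⟩ := ihxy
    obtain ⟨c, d, hcd⟩ := ihyz
    refine ⟨c + a, b + d, ?_⟩
    rw [iterate_add_apply, hab, ← iterate_add_apply, add_comm c b, iterate_add_apply, hcd,
      ← iterate_add_apply]

theorem countablySeparated_of_injective {α β : Type*} [MeasurableSpace α] [MeasurableSpace β]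
    [MeasurableSpace.CountablySeparated β] {f : α → β} (hf : Measurable f) (f_inj : Injective f) :
    MeasurableSpace.CountablySeparated α := by
  obtain ⟨S, hS, measurable_S, separates⟩ :=
    ‹MeasurableSpace.CountablySeparated β›.countably_separated
  refine ⟨Set.preimage f '' S, hS.image _, ?_, fun x _ y _ h => f_inj ?_⟩
  · rintro _ ⟨s, hs, rfl⟩
    exact hf (measurable_S s hs)
  · exact separates _ trivial _ trivial fun s hs => h _ ⟨s, hs, rfl⟩

variable {V : Type*} {T : SimpleGraph V} {v w : Geo T}

theorem tailRel_iff : tailRel T v w ↔ ∃ a b, (geoShift T)^[a] v = (geoShift T)^[b] w := by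
  refine ⟨exists_iterate_eq_of_eqvGen, fun ⟨a, b, hab⟩ => ?_⟩
  exact .trans _ _ _ (.rel _ _ ⟨a, rfl⟩) (hab ▸ .symm _ _ (.rel _ _ ⟨b, rfl⟩))

/-- The end of `T` represented by the geodesic `v`. -/
def toBdry (v : Geo T) : Bdry T := Quotient.mk (tailSetoid T) v

theorem toBdry_eq_iff : toBdry v = toBdry w ↔
    ∃ a b, (geoShift T)^[a] v = (geoShift T)^[b] w :=
  (Quotient.eq (r := tailSetoid T)).trans tailRel_iff

theorem toBdry_geoShift (v : Geo T) : toBdry (geoShift T v) = toBdry v :=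
  toBdry_eq_iff.mpr ⟨0, 1, rfl⟩

theorem rootedRay_eq_of_tailRel (hT : T.IsTree) (r : V) (h : tailRel T v w) :
    rootedRay hT r v = rootedRay hT r w := by
  obtain ⟨a, b, hab⟩ := tailRel_iff.mp h
  rw [← rootedRay_iterate_geoShift hT r v a, hab, rootedRay_iterate_geoShift]

/-- The geodesic ray from the root `r` representing the end `x`: a Borel section of `toBdry`. -/
noncomputable def bdryRay (hT : T.IsTree) (r : V) : Bdry T → Geo T :=
  Quotient.lift (rootedRay hT r) fun _ _ => rootedRay_eq_of_tailRel hT r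

theorem toBdry_bdryRay (hT : T.IsTree) (r : V) (x : Bdry T) : toBdry (bdryRay hT r x) = x := by
  induction x using Quotient.inductionOn with
  | h v =>
    obtain ⟨a, b, hab⟩ := exists_iterate_geoShift_eq_rootedRay hT r v
    exact toBdry_eq_iff.mpr ⟨b, a, hab.symm⟩

section Measurable

variable [MeasurableSpace V]

theorem measurable_geoShift : Measurable (geoShift T) :=
  (measurable_pi_lambda _ fun n => measurable_geo_apply (n + 1)).subtype_mk

theorem measurable_toBdry : Measurable (toBdry (T := T)) := measurable_quotient_mk''

variable [Countable V] [DiscreteMeasurableSpace V]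

theorem measurable_bdryRay (hT : T.IsTree) (r : V) : Measurable (bdryRay hT r) :=
  measurable_from_quotient.mpr (measurable_rootedRay hT r)

theorem countablySeparated_bdry (hT : T.IsTree) :
    MeasurableSpace.CountablySeparated (Bdry T) := by
  obtain ⟨r⟩ := hT.connected.nonempty
  exact countablySeparated_of_injective (measurable_bdryRay hT r)
    (LeftInverse.injective (toBdry_bdryRay hT r))

end Measurable

end Boundary

/-! ### The boundary action -/

section BoundaryAction

variable {V : Type*} {T : SimpleGraph V} {G : Type*} [Group G] [MulAction G V]
  [hact : Fact (IsGraphAction T G)]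

instance : MulAction G (Geo T) where
  smul := geoSmul hact.out
  one_smul v := Subtype.ext (one_smul G v.1)
  mul_smul g h v := Subtype.ext (mul_smul g h v.1)

instance : MulAction G (Bdry T) where
  smul := bdrySmul hact.out
  one_smul := Quotient.ind fun v => congrArg toBdry (one_smul G v)
  mul_smul g h := Quotient.ind fun v => congrArg toBdry (mul_smul g h v)

variable (T G)

/-- The shift of geodesics as an equivariant map. -/
def geoShiftHom : Geo T →[G] Geo T where
  toFun := geoShift T
  map_smul' := geoShift_geoSmul hact.out

/-- The map sending a geodesic to its end, as an equivariant map. -/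
def toBdryHom : Geo T →[G] Bdry T where
  toFun := toBdry
  map_smul' _ _ := rfl

/-- The map sending a geodesic `v` to its initial segment `(v 0, …, v n)`, as an equivariant map. -/
def initialSegmentHom (n : ℕ) : Geo T →[G] (Fin (n + 1) → V) where
  toFun v i := v.1 i
  map_smul' _ _ := rfl

variable {T G}

theorem stabilizer_eq_ptwiseStab (v : Geo T) : MulAction.stabilizer G v = ptwiseStab G v.1 :=
  Subgroup.ext fun _ => Subtype.ext_iff.trans funext_iff

theorem stabilizer_initialSegmentHom (n : ℕ) (v : Geo T) :
    MulAction.stabilizer G (initialSegmentHom T G n v) = initStab G v.1 n :=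
  Subgroup.ext fun _ => funext_iff.trans
    ⟨fun h k hk => h ⟨k, Nat.lt_succ_of_le hk⟩, fun h i => h i (Nat.le_of_lt_succ i.2)⟩

theorem eventually_initialSegmentHom_ne {v w : Geo T} (h : v ≠ w) :
    ∀ᶠ n in atTop, initialSegmentHom T G n v ≠ initialSegmentHom T G n w := by
  obtain ⟨k, hk⟩ := ne_iff.mp (Subtype.coe_injective.ne h)
  filter_upwards [eventually_ge_atTop k] with n hn heq
  exact hk (congrFun heq ⟨k, Nat.lt_succ_of_le hn⟩)

variable [MeasurableSpace V]

theorem measurable_initialSegmentHom (n : ℕ) : Measurable (initialSegmentHom T G n) :=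
  measurable_pi_lambda _ fun i => measurable_geo_apply i

instance [MeasurableConstSMul G V] : MeasurableConstSMul G (Geo T) where
  measurable_const_smul g := Measurable.subtype_mk (measurable_subtype_coe.const_smul g)

instance [MeasurableConstSMul G V] : MeasurableConstSMul G (Bdry T) where
  measurable_const_smul g :=
    measurable_from_quotient.mpr (measurable_toBdry.comp (measurable_const_smul (α := Geo T) g))

theorem borelAmenableAction_geo [Countable V] [DiscreteMeasurableSpace V] [Countable G]
    (h : ∀ v : Geo T, ∃ n : ℕ,
      UniformlyCoamenable ((ptwiseStab G v.1).subgroupOf (initStab G v.1 n))) :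
    BorelAmenableAction G (Geo T) := by
  refine borelAmenableAction_of_uniformlyCoamenable (ρ := initialSegmentHom T G)
    measurable_initialSegmentHom (fun v w => eventually_initialSegmentHom_ne) fun v => ?_
  exact (h v).imp fun n hn => by
    rwa [stabilizer_eq_ptwiseStab, stabilizer_initialSegmentHom]

end BoundaryAction

/-! ### STATEMENT 1 -/

theorem boundary_action_two_amenable_of_uniformly_coamenable_initial_segments
    {V : Type*} [Countable V] [MeasurableSpace V] [DiscreteMeasurableSpace V]
    (T : SimpleGraph V) (hT : T.IsTree)
    {G : Type*} [Group G] [Countable G] [MulAction G V]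
    (hact : IsGraphAction T G)
    (hstab : ∀ v : Geo T, ∃ n : ℕ,
      UniformlyCoamenable ((ptwiseStab G v.1).subgroupOf (initStab G v.1 n))) :
    Borel2Amenable (bdryRel hact) ∧ MeasureHyperfinite (bdryRel hact) := by
  have : Fact (IsGraphAction T G) := ⟨hact⟩
  have : MeasurableConstSMul G V := ⟨fun g => .of_discrete⟩
  have := countablySeparated_bdry hT
  have := measurableEq_of_countablySeparated (X := Bdry T)
  obtain ⟨r⟩ := hT.connected.nonempty
  have two_amenable : Borel2Amenable fun x y : Bdry T => y ∈ MulAction.orbit G x :=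
    borel2Amenable_of_borelAmenableAction (borelAmenableAction_geo hstab)
      (f := geoShiftHom T G) measurable_geoShift (π := toBdryHom T G) measurable_toBdry
      toBdry_geoShift (fun _ _ => toBdry_eq_iff.mp) (measurable_bdryRay hT r) (toBdry_bdryRay hT r)
  exact ⟨two_amenable, measureHyperfinite_of_borel2Amenable two_amenable⟩
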